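/- arXiv:1103.3236 — 2 statements merged into one kernel-verified Lean document; each statement's English description precedes it below -/
import Mathlib

section
/- Let f, g : ℂⁿ → ℂ be holomorphic map-germs at 0 with f(0) = g(0) = 0, neither constant, having no common factor, such that f·conj(g) is not constant and has an isolated critical value at 0. Then the real-analytic map f·conj(g) : ℂⁿ → ℂ is locally surjective at 0: the image of every neighbourhood of 0 in ℂⁿ contains a neighbourhood of 0 in ℂ. -/
open Filter Function

namespace FGbar
open Metric Complex MeasureTheory Topology

lemma torus_mem {n : ℕ} {R : ℝ} (hR : 0 < R) (θ : Fin n → ℝ) :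
    torusMap (0 : Fin n → ℂ) (fun _ => R) θ ∈ closedBall (0 : Fin n → ℂ) R := by
  rw [mem_closedBall_zero_iff, pi_norm_le_iff_of_nonneg hR.le]
  intro i
  simp [torusMap, Complex.norm_exp_ofReal_mul_I, abs_of_pos hR]

lemma continuous_torusMap {n : ℕ} (c : Fin n → ℂ) (R : Fin n → ℝ) :
    Continuous (torusMap c R) := by
  unfold torusMap
  fun_prop

lemma continuous_torusMap_apply {n : ℕ} (c : Fin n → ℂ) (R : Fin n → ℝ) (i : Fin n) :
    Continuous (fun θ => torusMap c R θ i) := by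
  unfold torusMap
  fun_prop

/-- The Banach algebra of bounded continuous functions of the angles. -/
abbrev AngleAlg (n : ℕ) := BoundedContinuousFunction (Fin n → ℝ) ℂ

lemma torus_sub_ne {n : ℕ} {R : ℝ} (hR : 0 < R) (z : Fin n → ℂ) (hz : z ∈ ball 0 R)
    (θ : Fin n → ℝ) (i : Fin n) :
    torusMap (0 : Fin n → ℂ) (fun _ => R) θ i - z i ≠ 0 := by
  intro h
  have h1 : ‖z i‖ = R := by
    rw [← sub_eq_zero.1 h]
    simp [torusMap, Complex.norm_exp_ofReal_mul_I, abs_of_pos hR]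
  have h2 : ‖z i‖ < R := lt_of_le_of_lt (norm_le_pi_norm z i) (mem_ball_zero_iff.1 hz)
  linarith

/-- Cauchy's formula on a polydisc. -/
lemma torus_cauchy {R : ℝ} (hR : 0 < R) : ∀ (n : ℕ) (f : (Fin n → ℂ) → ℂ)
    (_ : ∀ x ∈ closedBall (0 : Fin n → ℂ) R, DifferentiableAt ℂ f x)
    (z : Fin n → ℂ) (_ : z ∈ ball (0 : Fin n → ℂ) R),
    torusIntegral (fun x => (∏ i, (x i - z i)⁻¹) * f x) 0 (fun _ => R)
      = (2 * Real.pi * I) ^ n * f z := by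
  intro n
  induction n with
  | zero =>
    intro f hf z hz
    rw [torusIntegral_dim0]
    simp [Subsingleton.elim z 0]
  | succ n ih =>
    intro f hf z hz
    have hTI : TorusIntegrable (fun x => (∏ i, (x i - z i)⁻¹) * f x) 0 (fun _ => R) := by
      apply Continuous.integrableOn_Icc
      apply Continuous.mul
      · refine continuous_finsetProd _ fun i _ => ?_
        refine Continuous.inv₀ ?_ (fun θ => torus_sub_ne hR z hz θ i)
        exact (continuous_torusMap_apply _ _ i).sub continuous_const
      · rw [continuous_iff_continuousAt]
        intro θ
        exact ContinuousAt.comp (hf _ (torus_mem hR θ)).continuousAt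
          (continuous_torusMap _ _).continuousAt
    rw [torusIntegral_succ hTI]
    have hz' : (fun i : Fin n => z i.succ) ∈ ball (0 : Fin n → ℂ) R := by
      rw [mem_ball_zero_iff, pi_norm_lt_iff hR] at hz ⊢
      exact fun i => hz i.succ
    have hz0 : z 0 ∈ ball (0 : ℂ) R := by
      rw [mem_ball_zero_iff, pi_norm_lt_iff hR] at hz 
      rw [mem_ball_zero_iff]
      exact hz 0
    have hmem : ∀ x ∈ closedBall (0:ℂ) R, ∀ y ∈ closedBall (0 : Fin n → ℂ) R,
        (Fin.cons x y : Fin (n+1) → ℂ) ∈ closedBall (0 : Fin (n+1) → ℂ) R := by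
      intro x hx y hy
      rw [mem_closedBall_zero_iff] at hx hy ⊢
      rw [pi_norm_le_iff_of_nonneg hR.le] at hy ⊢
      intro i
      refine Fin.cases ?_ (fun j => ?_) i
      · simpa using hx
      · simpa using hy j
    have key : ∀ x ∈ sphere (0:ℂ) R,
        torusIntegral (fun y : Fin n → ℂ => (∏ i, ((Fin.cons x y : Fin (n+1) → ℂ) i - z i)⁻¹)
            * f (Fin.cons x y)) (0 : Fin n → ℂ) (fun _ => R)
          = (x - z 0)⁻¹ • ((2 * Real.pi * I) ^ n * f (Fin.cons x (fun i => z i.succ))) := by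
      intro x hx
      have h1 := ih (fun y => f (Fin.cons x y)) ?_ _ hz'
      · rw [← h1, smul_eq_mul, ← torusIntegral_const_mul]
        congr 1
        ext y
        rw [Fin.prod_univ_succ]
        simp only [Fin.cons_zero, Fin.cons_succ]
        ring
      · intro y hy
        have h2 := hf _ (hmem x (sphere_subset_closedBall hx) y hy)
        have h3 : DifferentiableAt ℂ (fun y : Fin n → ℂ => (Fin.cons x y : Fin (n+1) → ℂ)) y := by
          rw [differentiableAt_pi]
          intro i
          refine Fin.cases ?_ (fun j => ?_) i
          · simp
          · simp only [Fin.cons_succ]; fun_prop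
        exact DifferentiableAt.comp y h2 h3
    have e1 : (circleIntegral (fun x => torusIntegral (fun y : Fin n → ℂ =>
        (∏ i, ((Fin.cons x y : Fin (n+1) → ℂ) i - z i)⁻¹)
            * f (Fin.cons x y)) (0 : Fin n → ℂ) (fun _ => R)) 0 R)
          = circleIntegral (fun x => (x - z 0)⁻¹ •
            ((2 * Real.pi * I) ^ n * f (Fin.cons x (fun i => z i.succ)))) 0 R :=
      circleIntegral.integral_congr hR.le key
    refine e1.trans ?_
    have hd : DifferentiableOn ℂ (fun x : ℂ => (2 * Real.pi * I) ^ n *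
        f (Fin.cons x (fun i => z i.succ))) (closedBall 0 R) := by
      intro x hx
      have h2 := hf _ (hmem x hx _ (ball_subset_closedBall hz'))
      have h3 : DifferentiableAt ℂ (fun x : ℂ => (Fin.cons x (fun i => z i.succ) : Fin (n+1) → ℂ)) x := by
        rw [differentiableAt_pi]
        intro i
        refine Fin.cases ?_ (fun j => ?_) i
        · simp
        · simp
      exact ((DifferentiableAt.comp x h2 h3).const_mul _).differentiableWithinAt
    rw [hd.circleIntegral_sub_inv_smul hz0]
    have : (Fin.cons (z 0) (fun i => z i.succ) : Fin (n+1) → ℂ) = z := by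
      ext i
      refine Fin.cases ?_ (fun j => ?_) i <;> simp
    rw [this, smul_eq_mul]
    ring

open BoundedContinuousFunction in
/-- Osgood's lemma at the origin of `ℂⁿ`. -/
lemma osgood_pi {n : ℕ} (f : (Fin n → ℂ) → ℂ)
    (hf : ∀ᶠ x in 𝓝 (0 : Fin n → ℂ), DifferentiableAt ℂ f x) : AnalyticAt ℂ f 0 := by
  obtain ⟨R, hR, hfR⟩ := Metric.nhds_basis_closedBall.eventually_iff.1 hf
  let a : Fin n → AngleAlg n := fun i => BoundedContinuousFunction.ofNormedAddCommGroup
    (fun θ => torusMap (0 : Fin n → ℂ) (fun _ => R) θ i)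
    (continuous_torusMap_apply _ _ i) R (fun θ => by
      simp [torusMap, Complex.norm_exp_ofReal_mul_I, abs_of_pos hR])
  let b : Fin n → AngleAlg n := fun i => BoundedContinuousFunction.ofNormedAddCommGroup
    (fun θ => (torusMap (0 : Fin n → ℂ) (fun _ => R) θ i)⁻¹)
    (Continuous.inv₀ (continuous_torusMap_apply _ _ i) (fun θ => by
      simpa using torus_sub_ne hR 0 (mem_ball_self hR) θ i)) R⁻¹ (fun θ => by
      simp [torusMap, Complex.norm_exp_ofReal_mul_I, abs_of_pos hR])
  have hab : ∀ i, a i * b i = 1 := by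
    intro i
    ext θ
    have : torusMap (0 : Fin n → ℂ) (fun _ => R) θ i ≠ 0 := by
      simpa using torus_sub_ne hR 0 (mem_ball_self hR) θ i
    simp [a, b, this]
  have hu : ∀ i, IsUnit (a i) := fun i => IsUnit.of_mul_eq_one _ (hab i)
  let k : Fin n → (Fin n → ℂ) → AngleAlg n := fun i z => Ring.inverse (a i - z i • (1 : AngleAlg n))
  have hk : ∀ i, AnalyticAt ℂ (k i) 0 := by
    intro i
    have h1 : AnalyticAt ℂ (fun z : Fin n → ℂ => a i - z i • (1 : AngleAlg n)) 0 := by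
      apply AnalyticAt.sub analyticAt_const
      exact AnalyticAt.smul ((ContinuousLinearMap.proj (R := ℂ) (φ := fun _ : Fin n => ℂ) i).analyticAt _)
        analyticAt_const
    have h2 : AnalyticAt ℂ (Ring.inverse : AngleAlg n → AngleAlg n) (a i - (0 : Fin n → ℂ) i • (1 : AngleAlg n)) := by
      have := analyticAt_inverse (𝕜 := ℂ) (hu i).unit
      simpa using this
    exact AnalyticAt.comp (f := fun z : Fin n → ℂ => a i - z i • (1 : AngleAlg n)) h2 h1
  have hK : AnalyticAt ℂ (fun z => ∏ i, k i z) 0 :=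
    Finset.analyticAt_fun_prod _ fun i _ => hk i
  -- the functional
  let w : (Fin n → ℝ) → ℂ := fun θ => (∏ i : Fin n, (R : ℂ) * exp (θ i * I) * I) *
    f (torusMap (0 : Fin n → ℂ) (fun _ => R) θ)
  have hw : Continuous w := by
    apply Continuous.mul
    · fun_prop
    · rw [continuous_iff_continuousAt]
      intro θ
      exact ContinuousAt.comp (hfR (torus_mem hR θ)).continuousAt
          (continuous_torusMap _ _).continuousAt
  let S : Set (Fin n → ℝ) := Set.Icc 0 (fun _ => 2 * Real.pi)
  have hwi : ∀ φ : AngleAlg n, IntegrableOn (fun θ => w θ * φ θ) S := fun φ =>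
    (hw.mul φ.continuous).integrableOn_Icc
  let L0 : AngleAlg n →ₗ[ℂ] ℂ :=
    { toFun := fun φ => ∫ θ in S, w θ * φ θ
      map_add' := by
        intro φ ψ
        rw [← integral_add (hwi φ) (hwi ψ)]
        congr 1; ext θ
        simp [mul_add]
      map_smul' := by
        intro c φ
        simp only [RingHom.id_apply, smul_eq_mul]
        rw [← integral_const_mul]
        congr 1; ext θ
        simp; ring }
  let L : AngleAlg n →L[ℂ] ℂ := L0.mkContinuous (∫ θ in S, ‖w θ‖) (by
    intro φ
    change ‖∫ θ in S, w θ * φ θ‖ ≤ _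
    rw [← integral_mul_const]
    refine (norm_integral_le_integral_norm _).trans ?_
    refine integral_mono (hwi φ).norm ((hw.norm.mul continuous_const).integrableOn_Icc) ?_
    intro θ
    simp only [norm_mul]
    exact mul_le_mul_of_nonneg_left (φ.norm_coe_le_norm θ) (norm_nonneg _))
  have hLK : AnalyticAt ℂ (fun z => ((2 * Real.pi * I) ^ n)⁻¹ * L (∏ i, k i z)) 0 :=
    analyticAt_const.mul ((L.analyticAt _).comp hK)
  refine hLK.congr ?_
  have hunit : ∀ᶠ z : Fin n → ℂ in 𝓝 0, ∀ i, IsUnit (a i - z i • (1 : AngleAlg n)) := by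
    rw [eventually_all]
    intro i
    have hc : ContinuousAt (fun z : Fin n → ℂ => a i - z i • (1 : AngleAlg n)) 0 := 
      (continuous_const.sub ((continuous_apply i).smul continuous_const)).continuousAt
    refine hc.eventually (p := fun y => IsUnit y) ?_
    have := Units.isOpen.mem_nhds (x := a i - (0 : Fin n → ℂ) i • (1 : AngleAlg n)) (by simpa using hu i)
    exact this
  filter_upwards [hunit, ball_mem_nhds (0 : Fin n → ℂ) hR] with z hz hzR
  have hc := torus_cauchy hR n f (fun x hx => hfR hx) z hzR
  have hL : L (∏ i, k i z) = (2 * Real.pi * I) ^ n * f z := by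
    rw [← hc]
    change ∫ θ in S, w θ * (∏ i, k i z : AngleAlg n) θ = _
    unfold torusIntegral
    congr 1; ext θ
    have hkv : ∀ i, (k i z) θ = (torusMap (0 : Fin n → ℂ) (fun _ => R) θ i - z i)⁻¹ := by
      intro i
      have h1 : (a i - z i • (1 : AngleAlg n)) * k i z = 1 := Ring.mul_inverse_cancel _ (hz i)
      have h2 := congrArg (fun φ : AngleAlg n => φ θ) h1
      simp only [BoundedContinuousFunction.coe_mul, Pi.mul_apply, BoundedContinuousFunction.coe_one,
        Pi.one_apply] at h2
      refine eq_inv_of_mul_eq_one_right ?_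
      convert h2 using 2
      simp [a]
    have hp : (∏ i, k i z : AngleAlg n) θ = ∏ i, (k i z) θ := by
      simp
    rw [hp]
    simp only [hkv, w, smul_eq_mul]
    ring
  change ((2 * Real.pi * I) ^ n)⁻¹ * L (∏ i, k i z) = f z
  rw [hL]
  have : ((2 * Real.pi * I) ^ n : ℂ) ≠ 0 := pow_ne_zero _ Complex.two_pi_I_ne_zero
  field_simp

lemma osgood {n : ℕ} (f : EuclideanSpace ℂ (Fin n) → ℂ) (x : EuclideanSpace ℂ (Fin n))
    (hf : ∀ᶠ y in 𝓝 x, DifferentiableAt ℂ f y) : AnalyticAt ℂ f x := by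
  let e := EuclideanSpace.equiv (Fin n) ℂ
  have h1 : AnalyticAt ℂ (fun u : Fin n → ℂ => f (x + e.symm u)) 0 := by
    apply osgood_pi
    have hc : Tendsto (fun u : Fin n → ℂ => x + e.symm u) (𝓝 0) (𝓝 x) := by
      have : Continuous (fun u : Fin n → ℂ => x + e.symm u) := by fun_prop
      simpa using this.tendsto 0
    filter_upwards [hc.eventually hf] with u hu
    exact DifferentiableAt.comp u hu (by fun_prop)
  have h2 : AnalyticAt ℂ (fun y => e (y - x)) x := by
    apply (e.toContinuousLinearMap.analyticAt _).comp (g := e)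
    exact analyticAt_id.sub analyticAt_const
  have h3 := AnalyticAt.comp_of_eq h1 h2 (by simp)
  refine h3.congr (Eventually.of_forall fun y => ?_)
  simp

section generic
variable {E : Type*} [NormedAddCommGroup E] [NormedSpace ℂ E]

/-- Differentiability of a Cauchy-type integral in its parameter. -/
lemma differentiableAt_circle (φ : E → ℂ) (v z₀ : E) {r : ℝ} (hr : 0 < r)
    (h : ∀ ζ ∈ sphere (0 : ℂ) r, AnalyticAt ℂ φ (z₀ + ζ • v)) :
    DifferentiableAt ℂ (fun z => circleIntegral (fun ζ => (ζ - 0)⁻¹ • φ (z + ζ • v)) 0 r) z₀ := by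
  have hcomp : IsCompact (sphere (0 : ℂ) r) := isCompact_sphere _ _
  have hadd : ∀ ζ : ℂ, ContinuousAt (fun p : E × ℂ => p.1 + p.2 • v) (z₀, ζ) := by
    intro ζ; fun_prop
  have han : ∀ᶠ z in 𝓝 z₀, ∀ ζ ∈ sphere (0 : ℂ) r, AnalyticAt ℂ φ (z + ζ • v) := by
    refine hcomp.eventually_forall_of_forall_eventually fun ζ hζ => ?_
    exact (hadd ζ).eventually (h ζ hζ).eventually_analyticAt
  have hcs : ContinuousOn (fun ζ : ℂ => fderiv ℂ φ (z₀ + ζ • v)) (sphere (0 : ℂ) r) := by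
    intro ζ hζ
    have h1 : ContinuousAt (fderiv ℂ φ) (z₀ + ζ • v) := (h ζ hζ).fderiv.continuousAt
    have h2 : ContinuousAt (fun ζ : ℂ => z₀ + ζ • v) ζ := by fun_prop
    exact (ContinuousAt.comp (f := fun ζ : ℂ => z₀ + ζ • v) h1 h2).continuousWithinAt
  obtain ⟨B, hB⟩ := hcomp.exists_bound_of_continuousOn hcs
  have hbd : ∀ᶠ z in 𝓝 z₀, ∀ ζ ∈ sphere (0 : ℂ) r, ‖fderiv ℂ φ (z + ζ • v)‖ < B + 1 := by
    refine hcomp.eventually_forall_of_forall_eventually fun ζ hζ => ?_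
    have h1 : ContinuousAt (fun y => ‖fderiv ℂ φ y‖) (z₀ + ζ • v) := (h ζ hζ).fderiv.continuousAt.norm
    exact (hadd ζ).eventually (h1.eventually_lt_const
      (show ‖fderiv ℂ φ (z₀ + ζ • v)‖ < B + 1 by linarith [hB ζ hζ]))
  have hs := han.and hbd
  have hsph : ∀ θ : ℝ, circleMap 0 r θ ∈ sphere (0 : ℂ) r := fun θ => circleMap_mem_sphere 0 hr.le θ
  have hcm := continuous_circleMap (0 : ℂ) r
  have hcont : ∀ z, (∀ ζ ∈ sphere (0 : ℂ) r, AnalyticAt ℂ φ (z + ζ • v)) →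
      Continuous (fun θ : ℝ => I • φ (z + circleMap 0 r θ • v)) := by
    intro z hz
    rw [continuous_iff_continuousAt]
    intro θ
    have h2 : ContinuousAt (fun θ : ℝ => z + circleMap 0 r θ • v) θ := by fun_prop
    have h3 : ContinuousAt (fun θ : ℝ => φ (z + circleMap 0 r θ • v)) θ :=
      ContinuousAt.comp (f := fun θ : ℝ => z + circleMap 0 r θ • v)
        (hz _ (hsph θ)).continuousAt h2
    exact ContinuousAt.comp (g := fun y => I • y) (continuous_const_smul I).continuousAt h3
  have hcont' : Continuous (fun θ : ℝ => I • fderiv ℂ φ (z₀ + circleMap 0 r θ • v)) := by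
    rw [continuous_iff_continuousAt]
    intro θ
    have h2 : ContinuousAt (fun θ : ℝ => z₀ + circleMap 0 r θ • v) θ := by fun_prop
    have h3 : ContinuousAt (fun θ : ℝ => fderiv ℂ φ (z₀ + circleMap 0 r θ • v)) θ :=
      ContinuousAt.comp (f := fun θ : ℝ => z₀ + circleMap 0 r θ • v)
        (h _ (hsph θ)).fderiv.continuousAt h2
    exact ContinuousAt.comp (g := fun y => I • y) (continuous_const_smul I).continuousAt h3
  have main := intervalIntegral.hasFDerivAt_integral_of_dominated_of_fderiv_le (𝕜 := ℂ)
    (μ := volume) (a := 0) (b := 2 * Real.pi) (x₀ := z₀)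
    (F := fun z θ => I • φ (z + circleMap 0 r θ • v))
    (F' := fun z θ => I • fderiv ℂ φ (z + circleMap 0 r θ • v)) (bound := fun _ => B + 1)
    hs
    (by filter_upwards [han] with z hz using (hcont z hz).aestronglyMeasurable)
    ((hcont z₀ h).intervalIntegrable _ _)
    hcont'.aestronglyMeasurable
    (by
      refine Eventually.of_forall fun θ _ z hz => ?_
      rw [norm_smul, norm_I, one_mul]
      exact (hz.2 _ (hsph θ)).le)
    (continuous_const.intervalIntegrable _ _)
    (by
      refine Eventually.of_forall fun θ _ z hz => ?_
      have h1 := (hz.1 _ (hsph θ)).differentiableAt.hasFDerivAt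
      have h2 : HasFDerivAt (fun z : E => z + circleMap 0 r θ • v) (ContinuousLinearMap.id ℂ E) z :=
        (hasFDerivAt_id z).add_const _
      have h3 := HasFDerivAt.comp z h1 h2
      rw [ContinuousLinearMap.comp_id] at h3
      exact h3.const_smul I)
  refine main.differentiableAt.congr_of_eventuallyEq (Eventually.of_forall fun z => ?_)
  simp only [circleIntegral]
  congr 1
  ext θ
  have : circleMap 0 r θ ≠ 0 := circleMap_ne_center hr.ne'
  simp only [deriv_circleMap, sub_zero, smul_eq_mul]
  field_simp

end generic

/-- Local comparison of two one-variable germs. -/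
lemma compare {F G : ℂ → ℂ} {w : ℂ} (hF : AnalyticAt ℂ F w) (hG : AnalyticAt ℂ G w)
    (hF0 : ¬ ∀ᶠ z in 𝓝 w, F z = 0) :
    (∃ q : ℂ → ℂ, AnalyticAt ℂ q w ∧ ∀ᶠ z in 𝓝 w, G z = F z * q z) ∨
    (∃ M : ℂ → ℂ, AnalyticAt ℂ M w ∧ M w = 0 ∧ ∀ᶠ z in 𝓝 w, F z = M z * G z) := by
  by_cases hG0 : ∀ᶠ z in 𝓝 w, G z = 0
  · left
    exact ⟨fun _ => 0, analyticAt_const, by filter_upwards [hG0] with z hz; simp [hz]⟩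
  obtain ⟨a, u, hu, hu0, hFu⟩ := hF.exists_eventuallyEq_pow_smul_nonzero_iff.2 hF0
  obtain ⟨b, t, ht, ht0, hGt⟩ := hG.exists_eventuallyEq_pow_smul_nonzero_iff.2 hG0
  have hune := hu.continuousAt.eventually_ne hu0
  have htne := ht.continuousAt.eventually_ne ht0
  have hid : AnalyticAt ℂ (fun z : ℂ => z - w) w := analyticAt_id.sub analyticAt_const
  rcases le_or_gt a b with hab | hab
  · left
    refine ⟨fun z => (z - w) ^ (b - a) * (t z / u z), (hid.pow _).mul (ht.div hu hu0), ?_⟩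
    filter_upwards [hFu, hGt, hune] with z h1 h2 h3
    rw [h1, h2]
    obtain ⟨c, rfl⟩ := Nat.exists_eq_add_of_le hab
    simp only [smul_eq_mul, Nat.add_sub_cancel_left, pow_add]
    field_simp
  · right
    refine ⟨fun z => (z - w) ^ (a - b) * (u z / t z), (hid.pow _).mul (hu.div ht ht0), ?_, ?_⟩
    · simp; left; omega
    filter_upwards [hFu, hGt, htne] with z h1 h2 h3
    rw [h1, h2]
    obtain ⟨c, rfl⟩ := Nat.exists_eq_add_of_le hab.le
    simp only [smul_eq_mul, Nat.add_sub_cancel_left, pow_add]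
    field_simp

lemma punctured_ne {F : ℂ → ℂ} {r : ℝ} (hr : 0 < r) (hF : AnalyticOnNhd ℂ F (closedBall 0 r))
    (hs : ∀ w ∈ sphere (0 : ℂ) r, F w ≠ 0) {w : ℂ} (hw : w ∈ closedBall (0 : ℂ) r) :
    ∀ᶠ z in 𝓝[≠] w, F z ≠ 0 := by
  by_contra hcon
  have h1 : ∃ᶠ z in 𝓝[≠] w, F z = 0 := by
    intro h; exact hcon h
  have h2 := hF.eqOn_zero_of_preconnected_of_frequently_eq_zero
    (convex_closedBall (0:ℂ) r).isPreconnected hw h1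
  have hrs : (r : ℂ) ∈ sphere (0 : ℂ) r := by simp [abs_of_pos hr]
  exact hs _ hrs (h2 (sphere_subset_closedBall hrs))

lemma not_ev_zero {F : ℂ → ℂ} {w : ℂ} (h : ∀ᶠ z in 𝓝[≠] w, F z ≠ 0) :
    ¬ ∀ᶠ z in 𝓝 w, F z = 0 := by
  intro h2
  obtain ⟨z, hz1, hz2⟩ := (h.and (h2.filter_mono nhdsWithin_le_nhds)).exists
  exact hz1 hz2

/-- If `G` is locally divisible by `F` on a disc, the quotient at the centre is given by Cauchy. -/
lemma quotient_cauchy {F G : ℂ → ℂ} {r : ℝ} (hr : 0 < r)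
    (hF : AnalyticOnNhd ℂ F (closedBall 0 r))
    (hs : ∀ w ∈ sphere (0 : ℂ) r, F w ≠ 0)
    (hdiv : ∀ w ∈ closedBall (0 : ℂ) r,
      ∃ q : ℂ → ℂ, AnalyticAt ℂ q w ∧ ∀ᶠ z in 𝓝 w, G z = F z * q z) :
    G 0 = F 0 * ((2 * Real.pi * I)⁻¹ * circleIntegral (fun ζ => (ζ - 0)⁻¹ • (G ζ / F ζ)) 0 r) := by
  classical
  choose! q hq hqe using hdiv
  let Q : ℂ → ℂ := fun w => if F w = 0 then q w w else G w / F w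
  have hQv : ∀ w ∈ closedBall (0 : ℂ) r, Q w = q w w := by
    intro w hw
    by_cases h : F w = 0
    · simp [Q, h]
    · have := (hqe w hw).self_of_nhds
      simp only [Q, h, if_false]
      rw [this]; field_simp
  have hQ : ∀ w ∈ closedBall (0 : ℂ) r, AnalyticAt ℂ Q w := by
    intro w hw
    refine (hq w hw).congr ?_
    have h1 := punctured_ne hr hF hs hw
    rw [eventually_nhdsWithin_iff] at h1
    filter_upwards [h1, hqe w hw] with z hz hz2
    by_cases hzw : z = w
    · rw [hzw, hQv w hw]
    · have := hz hzw
      simp only [Q, this, if_false]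
      rw [hz2]; field_simp
  have hd : DifferentiableOn ℂ Q (closedBall 0 r) := fun w hw =>
    (hQ w hw).differentiableAt.differentiableWithinAt
  have hc := hd.circleIntegral_sub_inv_smul (mem_ball_self hr)
  have he : circleIntegral (fun ζ => (ζ - 0)⁻¹ • Q ζ) 0 r
      = circleIntegral (fun ζ => (ζ - 0)⁻¹ • (G ζ / F ζ)) 0 r := by
    refine circleIntegral.integral_congr hr.le fun ζ hζ => ?_
    simp [Q, hs ζ hζ]
  rw [← he, hc, smul_eq_mul, ← mul_assoc _ _ (Q 0), inv_mul_cancel₀ Complex.two_pi_I_ne_zero, one_mul]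
  have h0 : (0 : ℂ) ∈ closedBall (0 : ℂ) r := mem_closedBall_self hr.le
  rw [hQv 0 h0]
  exact (hqe 0 h0).self_of_nhds

/-- Following a root along a path until a prescribed size is attained. -/
lemma root_path (φ : ℝ → ℂ → ℂ) (γ : ℝ → ℂ → ℝ) {r β : ℝ} (hr : 0 < r)
    (hφc : ContinuousOn (uncurry φ) (Set.Icc 0 1 ×ˢ closedBall 0 r))
    (hγc : ContinuousOn (uncurry γ) (Set.Icc 0 1 ×ˢ closedBall 0 r))
    (hφa : ∀ s ∈ Set.Icc (0:ℝ) 1, AnalyticOnNhd ℂ (φ s) (closedBall 0 r))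
    (hφs : ∀ s ∈ Set.Icc (0:ℝ) 1, ∀ w ∈ sphere (0 : ℂ) r, φ s w ≠ 0)
    (h0 : ∀ w ∈ closedBall (0 : ℂ) r, φ 0 w = 0 → γ 0 w < β)
    (h1 : ∃ w ∈ closedBall (0 : ℂ) r, φ 1 w = 0 ∧ β ≤ γ 1 w) :
    ∃ s ∈ Set.Icc (0:ℝ) 1, ∃ w ∈ closedBall (0 : ℂ) r, φ s w = 0 ∧ γ s w = β := by
  let D : Set (ℝ × ℂ) := Set.Icc 0 1 ×ˢ closedBall 0 r
  have hD : IsCompact D := isCompact_Icc.prod (isCompact_closedBall _ _)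
  let T : Set (ℝ × ℂ) := {p ∈ D | φ p.1 p.2 = 0 ∧ β ≤ γ p.1 p.2}
  have hT : IsCompact T := by
    have c1 : IsClosed (D ∩ uncurry φ ⁻¹' {0}) := hφc.preimage_isClosed_of_isClosed hD.isClosed isClosed_singleton
    have c2 : IsClosed (D ∩ uncurry γ ⁻¹' Set.Ici β) := hγc.preimage_isClosed_of_isClosed hD.isClosed isClosed_Ici
    refine hD.of_isClosed_subset (?_ : IsClosed T) (fun p hp => hp.1)
    convert c1.inter c2 using 1
    ext p
    simp only [T, Set.mem_ofPred_eq, Set.mem_inter_iff, Set.mem_preimage, Set.mem_singleton_iff,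
      Set.mem_Ici, uncurry]
    tauto
  obtain ⟨w1, hw1, hw1z, hw1b⟩ := h1
  have hTne : T.Nonempty := ⟨(1, w1), ⟨⟨by simp, hw1⟩, hw1z, hw1b⟩⟩
  obtain ⟨⟨s, w⟩, hsw, hmin⟩ := hT.exists_isMinOn hTne continuous_fst.continuousOn
  obtain ⟨⟨hsI, hwD⟩, hz, hβ⟩ := hsw
  simp only at hsI hwD hz hβ
  refine ⟨s, hsI, w, hwD, hz, ?_⟩
  by_contra hne
  have hgt : β < γ s w := lt_of_le_of_ne hβ (Ne.symm hne)
  have hs0 : 0 < s := by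
    rcases hsI.1.eq_or_lt with h | h
    · exfalso
      subst h
      linarith [h0 w hwD hz]
    · exact h
  have hwb : w ∈ ball (0 : ℂ) r := by
    rcases (mem_closedBall.1 hwD).eq_or_lt with h | h
    · exact absurd hz (hφs s hsI w h)
    · exact h
  -- neighbourhood where `γ > β`
  have hγn : ∀ᶠ p in 𝓝[D] (s, w), β < γ p.1 p.2 :=
    (hγc (s, w) ⟨hsI, hwD⟩).eventually (lt_mem_nhds hgt)
  rw [Metric.nhdsWithin_basis_ball.eventually_iff] at hγn
  obtain ⟨ε, hε, hγε⟩ := hγn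
  have hpn := punctured_ne hr (hφa s hsI) (hφs s hsI) hwD
  rw [eventually_nhdsWithin_iff, Metric.nhds_basis_ball.eventually_iff] at hpn
  obtain ⟨ε2, hε2, hpn⟩ := hpn
  obtain ⟨ε3, hε3, hball⟩ := Metric.isOpen_ball.mem_nhds hwb |> Metric.mem_nhds_iff.1
  obtain ⟨ρ, hρ, hρ'⟩ : ∃ ρ > 0, ρ < min ε (min ε2 ε3) :=
    exists_between (lt_min hε (lt_min hε2 hε3))
  have hρ1 : ρ < ε := hρ'.trans_le (min_le_left _ _)
  have hρ2 : ρ < ε2 := hρ'.trans_le ((min_le_right _ _).trans (min_le_left _ _))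
  have hρ3 : ρ < ε3 := hρ'.trans_le ((min_le_right _ _).trans (min_le_right _ _))
  have hcb : closedBall w ρ ⊆ closedBall 0 r := fun x hx =>
    ball_subset_closedBall (hball (closedBall_subset_ball hρ3 hx))
  have hsne : ∀ x ∈ sphere w ρ, φ s x ≠ 0 := by
    intro x hx
    refine hpn (sphere_subset_closedBall.trans (closedBall_subset_ball hρ2) hx) ?_
    rintro rfl
    have := mem_sphere.1 hx
    rw [dist_self] at this
    exact hρ.ne this
  have hφs_cont : ContinuousOn (φ s) (closedBall 0 r) := (hφa s hsI).continuousOn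
  obtain ⟨m, hm, hmle⟩ := (isCompact_sphere w ρ).exists_forall_le' (f := fun x => ‖φ s x‖) (a := 0)
    ((hφs_cont.mono (sphere_subset_closedBall.trans hcb)).norm) (fun x hx => norm_pos_iff.2 (hsne x hx))
  -- uniform closeness for nearby parameters
  have huc := hD.uniformContinuousOn_of_continuous hφc
  rw [Metric.uniformContinuousOn_iff] at huc
  obtain ⟨δ, hδ, hu⟩ := huc (m / 4) (by positivity)
  obtain ⟨s', hs'1, hs'2⟩ : ∃ s', max 0 (max (s - δ) (s - ε)) < s' ∧ s' < s :=
    exists_between (max_lt hs0 (max_lt (by linarith) (by linarith)))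
  have hs'a : 0 < s' := (le_max_left _ _).trans_lt hs'1
  have hs'b : s - δ < s' := ((le_max_left _ _).trans (le_max_right _ _)).trans_lt hs'1
  have hs'c : s - ε < s' := ((le_max_right _ _).trans (le_max_right _ _)).trans_lt hs'1
  have hs'I : s' ∈ Set.Icc (0:ℝ) 1 := ⟨hs'a.le, hs'2.le.trans hsI.2⟩
  have hclose : ∀ x ∈ closedBall (0 : ℂ) r, ‖φ s' x - φ s x‖ < m / 4 := by
    intro x hx
    have := hu (s', x) ⟨hs'I, hx⟩ (s, x) ⟨hsI, hx⟩ (by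
      simp only [Prod.dist_eq, dist_self, Real.dist_eq]
      rw [max_lt_iff, abs_lt]
      exact ⟨⟨by linarith, by linarith⟩, hδ⟩)
    simpa [dist_eq_norm, uncurry] using this
  have hws : ‖φ s' w‖ < m / 4 := by simpa [hz] using hclose w hwD
  have hsph : ∀ x ∈ sphere w ρ, m / 2 ≤ ‖φ s' x - φ s' w‖ := by
    intro x hx
    have h1 := hmle x hx
    have h2 := hclose x (hcb (sphere_subset_closedBall hx))
    have h3 : ‖φ s x‖ ≤ ‖φ s' x - φ s' w‖ + ‖φ s' w‖ + ‖φ s' x - φ s x‖ := by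
      have : φ s x = (φ s' x - φ s' w) + φ s' w - (φ s' x - φ s x) := by ring
      calc ‖φ s x‖ = ‖(φ s' x - φ s' w) + φ s' w - (φ s' x - φ s x)‖ := by rw [← this]
        _ ≤ _ := (norm_sub_le _ _).trans (add_le_add_left (norm_add_le _ _) _)
    linarith
  have hdc : DiffContOnCl ℂ (φ s') (ball w ρ) := by
    apply DifferentiableOn.diffContOnCl
    rw [closure_ball _ hρ.ne']
    exact fun x hx => (hφa s' hs'I x (hcb hx)).differentiableAt.differentiableWithinAt
  have hfreq : ∃ᶠ x in 𝓝 w, φ s' x ≠ φ s' w := by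
    intro hcon
    have hev : ∀ᶠ x in 𝓝 w, φ s' x = φ s' w := by
      filter_upwards [hcon] with x hx using not_not.1 hx
    have heq := ((hφa s' hs'I).mono hcb).eqOn_of_preconnected_of_eventuallyEq
      (analyticOnNhd_const (v := φ s' w)) (convex_closedBall w ρ).isPreconnected
      (mem_closedBall_self hρ.le) hev
    have hpt : w + (ρ : ℂ) ∈ sphere w ρ := by simp [abs_of_pos hρ]
    have h4 := hsph _ hpt
    rw [heq (sphere_subset_closedBall hpt)] at h4
    simp at h4
    linarith
  have himg := hdc.ball_subset_image_closedBall hρ hsph hfreq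
  have h0m : (0 : ℂ) ∈ ball (φ s' w) (m / 2 / 2) := by
    rw [mem_ball, dist_comm, dist_zero_right]; linarith
  obtain ⟨x, hx, hx0⟩ := himg h0m
  have hxγ : β < γ s' x := by
    refine hγε (x := (s', x)) ⟨?_, ⟨hs'I, hcb hx⟩⟩
    rw [mem_ball, Prod.dist_eq, max_lt_iff]
    refine ⟨?_, (mem_closedBall.1 hx).trans_lt hρ1⟩
    rw [Real.dist_eq, abs_lt]
    exact ⟨by linarith, by linarith⟩
  have hmem : ((s', x) : ℝ × ℂ) ∈ T := ⟨⟨hs'I, hcb hx⟩, hx0, hxγ.le⟩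
  have := hmin hmem
  simp at this
  linarith


/-- The core: if the germ `f` has, along a line, order at most that of `g`, and `f` does not divide
`g`, then `f * conj g` covers a neighbourhood of `0`. -/
lemma core {n : ℕ} (f g : EuclideanSpace ℂ (Fin n) → ℂ) (v : EuclideanSpace ℂ (Fin n))
    {ρ : ℝ} (hρ : 0 < ρ) (hf : AnalyticOnNhd ℂ f (ball 0 ρ)) (hg : AnalyticOnNhd ℂ g (ball 0 ρ))
    (hg0 : g 0 = 0) {C : ℝ} (hC : 0 ≤ C)
    (hb : ∀ᶠ ζ : ℂ in 𝓝 0, ‖g (ζ • v)‖ ≤ C * ‖f (ζ • v)‖)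
    (hne : ∀ᶠ ζ : ℂ in 𝓝[≠] 0, f (ζ • v) ≠ 0)
    (hdiv : ¬ ∃ q : EuclideanSpace ℂ (Fin n) → ℂ, AnalyticAt ℂ q 0 ∧
      ∀ᶠ z in 𝓝 0, g z = f z * q z) :
    ∃ ε > 0, ∀ t : ℂ, ‖t‖ < ε → ∃ x ∈ ball (0 : EuclideanSpace ℂ (Fin n)) ρ,
      f x * (starRingEnd ℂ) (g x) = t := by
  -- the radius `r`
  have hsm : ∀ᶠ ζ : ℂ in 𝓝 0, ‖ζ • v‖ < ρ / 2 := by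
    have : ContinuousAt (fun ζ : ℂ => ‖ζ • v‖) 0 := by fun_prop
    exact this.eventually_lt_const (by simpa using (by positivity : 0 < ρ / 2))
  rw [eventually_nhdsWithin_iff] at hne
  obtain ⟨r, hr, hall⟩ := Metric.nhds_basis_closedBall.eventually_iff.1 (hsm.and (hb.and hne))
  have hin : ∀ z ∈ ball (0 : EuclideanSpace ℂ (Fin n)) (ρ / 2), ∀ ζ ∈ closedBall (0 : ℂ) r,
      z + ζ • v ∈ ball (0 : EuclideanSpace ℂ (Fin n)) ρ := by
    intro z hz ζ hζ
    rw [mem_ball_zero_iff] at hz ⊢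
    have := (hall hζ).1
    linarith [norm_add_le z (ζ • v)]
  have hadd : ∀ ζ : ℂ, ContinuousAt (fun p : EuclideanSpace ℂ (Fin n) × ℂ => p.1 + p.2 • v) (0, ζ) := by
    intro ζ; fun_prop
  have hsphere0 : ∀ᶠ z in 𝓝 (0 : EuclideanSpace ℂ (Fin n)), ∀ ζ ∈ sphere (0 : ℂ) r,
      ‖g (z + ζ • v)‖ < (C + 1) * ‖f (z + ζ • v)‖ := by
    refine (isCompact_sphere (0:ℂ) r).eventually_forall_of_forall_eventually fun ζ hζ => ?_
    have hζ' := sphere_subset_closedBall hζ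
    have hmem := hin 0 (mem_ball_self (by positivity)) ζ hζ'
    have hfc := (hf _ hmem).continuousAt
    have hgc := (hg _ hmem).continuousAt
    have hlt : ‖g (0 + ζ • v)‖ < (C + 1) * ‖f (0 + ζ • v)‖ := by
      rw [zero_add]
      have h1 := (hall hζ').2.1
      have h2 := (hall hζ').2.2 (by rintro rfl; simp at hζ; exact hr.ne hζ)
      have := norm_pos_iff.2 h2
      linarith
    have h3 : ∀ᶠ y in 𝓝 (0 + ζ • v), ‖g y‖ < (C + 1) * ‖f y‖ :=
      hgc.norm.eventually_lt (continuousAt_const.mul hfc.norm) hlt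
    exact (hadd ζ).eventually h3
  obtain ⟨η0, hη0, hsphere1⟩ := Metric.nhds_basis_ball.eventually_iff.1 hsphere0
  obtain ⟨η, hη, hη1, hη2⟩ : ∃ η > 0, η ≤ η0 ∧ η ≤ ρ / 2 :=
    ⟨min η0 (ρ / 2), by positivity, min_le_left _ _, min_le_right _ _⟩
  have hsph : ∀ z ∈ ball (0 : EuclideanSpace ℂ (Fin n)) η, ∀ ζ ∈ sphere (0 : ℂ) r,
      ‖g (z + ζ • v)‖ < (C + 1) * ‖f (z + ζ • v)‖ := fun z hz => hsphere1 (ball_subset_ball hη1 hz)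
  have hin' : ∀ z ∈ ball (0 : EuclideanSpace ℂ (Fin n)) η, ∀ ζ ∈ closedBall (0 : ℂ) r,
      z + ζ • v ∈ ball (0 : EuclideanSpace ℂ (Fin n)) ρ := fun z hz => hin z (ball_subset_ball hη2 hz)
  have hfs : ∀ z ∈ ball (0 : EuclideanSpace ℂ (Fin n)) η, ∀ ζ ∈ sphere (0 : ℂ) r,
      f (z + ζ • v) ≠ 0 := by
    intro z hz ζ hζ h
    have := hsph z hz ζ hζ
    rw [h] at this
    simp at this
    linarith [norm_nonneg (g (z + ζ • v))]
  have hline : ∀ z : EuclideanSpace ℂ (Fin n), ∀ ζ : ℂ,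
      AnalyticAt ℂ (fun ζ : ℂ => z + ζ • v) ζ := by
    intro z ζ
    exact analyticAt_const.add (analyticAt_id.smul analyticAt_const)
  have hFa : ∀ z ∈ ball (0 : EuclideanSpace ℂ (Fin n)) η,
      AnalyticOnNhd ℂ (fun ζ : ℂ => f (z + ζ • v)) (closedBall 0 r) := fun z hz ζ hζ =>
    AnalyticAt.comp (f := fun ζ : ℂ => z + ζ • v) (hf _ (hin' z hz ζ hζ)) (hline z ζ)
  have hGa : ∀ z ∈ ball (0 : EuclideanSpace ℂ (Fin n)) η,
      AnalyticOnNhd ℂ (fun ζ : ℂ => g (z + ζ • v)) (closedBall 0 r) := fun z hz ζ hζ =>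
    AnalyticAt.comp (f := fun ζ : ℂ => z + ζ • v) (hg _ (hin' z hz ζ hζ)) (hline z ζ)
  -- find a point where `f` vanishes to higher order than `g`
  obtain ⟨z1, hz1, w0, hw0, M, hMa, hM0, hFMG⟩ : ∃ z1 ∈ ball (0 : EuclideanSpace ℂ (Fin n)) η,
      ∃ w0 ∈ closedBall (0 : ℂ) r, ∃ M : ℂ → ℂ, AnalyticAt ℂ M w0 ∧ M w0 = 0 ∧
        ∀ᶠ z in 𝓝 w0, f (z1 + z • v) = M z * g (z1 + z • v) := by
    by_contra hcon
    push Not at hcon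
    apply hdiv
    refine ⟨fun z => (2 * Real.pi * I)⁻¹ *
      circleIntegral (fun ζ => (ζ - 0)⁻¹ • (g (z + ζ • v) / f (z + ζ • v))) 0 r, ?_, ?_⟩
    · apply osgood
      filter_upwards [ball_mem_nhds (0 : EuclideanSpace ℂ (Fin n)) hη] with z hz
      refine DifferentiableAt.const_mul ?_ _
      apply differentiableAt_circle (fun y => g y / f y) v z hr
      intro ζ hζ
      have hm := hin' z hz ζ (sphere_subset_closedBall hζ)
      exact (hg _ hm).div (hf _ hm) (hfs z hz ζ hζ)
    · filter_upwards [ball_mem_nhds (0 : EuclideanSpace ℂ (Fin n)) hη] with z hz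
      have := quotient_cauchy (F := fun ζ : ℂ => f (z + ζ • v)) (G := fun ζ : ℂ => g (z + ζ • v))
        hr (hFa z hz) (hfs z hz) (by
          intro w hw
          rcases compare (hFa z hz w hw) (hGa z hz w hw)
            (not_ev_zero (punctured_ne hr (hFa z hz) (hfs z hz) hw)) with h | ⟨M, h1, h2, h3⟩
          · exact h
          · exact absurd (hcon z hz w hw M h1 h2) (by
              rw [Filter.not_frequently]
              filter_upwards [h3] with x hx
              exact not_not.2 hx))
      simpa using this
  set F : ℂ → ℂ := fun ζ => f (z1 + ζ • v) with hFdef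
  set G : ℂ → ℂ := fun ζ => g (z1 + ζ • v) with hGdef
  have hFp := punctured_ne hr (hFa z1 hz1) (hfs z1 hz1) hw0
  have hw0b : w0 ∈ ball (0 : ℂ) r := by
    rcases (mem_closedBall.1 hw0).eq_or_lt with h | h
    · exfalso
      apply hfs z1 hz1 w0 h
      have := hFMG.self_of_nhds
      rw [this, hM0, zero_mul]
    · exact h
  have hMopen : 𝓝 (M w0) ≤ map M (𝓝 w0) := by
    rcases hMa.eventually_constant_or_nhds_le_map_nhds with h | h
    · exfalso
      apply not_ev_zero hFp
      filter_upwards [h, hFMG] with z h1 h2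
      change f (z1 + z • v) = 0
      rw [h2, h1, hM0, zero_mul]
    · exact h
  rw [hM0] at hMopen
  rw [eventually_nhdsWithin_iff] at hFp
  obtain ⟨ρ1, hρ1, hnice⟩ := Metric.nhds_basis_closedBall.eventually_iff.1
    ((hMa.eventually_analyticAt.and hFMG).and (hFp.and (isOpen_ball.mem_nhds hw0b)))
  have himg : M '' closedBall w0 ρ1 ∈ 𝓝 (0 : ℂ) :=
    hMopen (image_mem_map (closedBall_mem_nhds w0 hρ1))
  obtain ⟨l0, hl0, hl0s⟩ := Metric.nhds_basis_closedBall.mem_iff.1 himg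
  obtain ⟨l, hl, hll0, hlC⟩ : ∃ l > 0, l ≤ l0 ∧ l * (C + 1) ≤ 1 := by
    refine ⟨min l0 (1 / (C + 1)), by positivity, min_le_left _ _, ?_⟩
    calc min l0 (1 / (C + 1)) * (C + 1) ≤ 1 / (C + 1) * (C + 1) := by
          gcongr; exact min_le_right _ _
      _ = 1 := by field_simp
  -- lower bound of `G` on the level set
  have hMc : ContinuousOn M (closedBall w0 ρ1) := fun x hx =>
    (hnice hx).1.1.continuousAt.continuousWithinAt
  have hsub : closedBall w0 ρ1 ⊆ closedBall 0 r := fun x hx => ball_subset_closedBall (hnice hx).2.2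
  let K : Set ℂ := closedBall w0 ρ1 ∩ (fun w => ‖M w‖) ⁻¹' {l}
  have hK : IsCompact K := by
    refine (isCompact_closedBall w0 ρ1).of_isClosed_subset ?_ Set.inter_subset_left
    exact hMc.norm.preimage_isClosed_of_isClosed isClosed_closedBall isClosed_singleton
  have hGK : ∀ w ∈ K, 0 < ‖G w‖ := by
    intro w hw
    rw [norm_pos_iff]
    intro hG
    have hwl : ‖M w‖ = l := hw.2
    have hwne : w ≠ w0 := by
      rintro rfl
      rw [hM0, norm_zero] at hwl
      exact hl.ne hwl
    apply (hnice hw.1).2.1 hwne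
    have := (hnice hw.1).1.2
    change f (z1 + w • v) = 0
    rw [this]
    change M w * G w = 0
    rw [hG, mul_zero]
  have hGc : ContinuousOn G (closedBall 0 r) := (hGa z1 hz1).continuousOn
  obtain ⟨e0, he0, he0le⟩ := hK.exists_forall_le' (f := fun w => ‖G w‖) (a := 0)
    ((hGc.mono (Set.inter_subset_left.trans hsub)).norm) hGK
  refine ⟨l * e0 ^ 2, by positivity, fun t ht => ?_⟩
  by_cases ht0 : t = 0
  · exact ⟨0, mem_ball_self hρ, by simp [hg0, ht0]⟩
  have htp : 0 < ‖t‖ := norm_pos_iff.2 ht0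
  set μ : ℂ := (l : ℂ) * (t / (‖t‖ : ℂ)) with hμ
  have hμn : ‖μ‖ = l := by
    rw [hμ, norm_mul, norm_div, Complex.norm_real, Complex.norm_real, norm_norm, div_self htp.ne',
      mul_one, Real.norm_of_nonneg hl.le]
  set β : ℝ := Real.sqrt (‖t‖ / l) with hβ
  have hβp : 0 < β := Real.sqrt_pos.2 (by positivity)
  have hβ2 : β ^ 2 = ‖t‖ / l := Real.sq_sqrt (by positivity)
  have hβe : β < e0 := by
    refine lt_of_pow_lt_pow_left₀ 2 he0.le ?_
    rw [hβ2, div_lt_iff₀ hl]; linarith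
  have hsz : ∀ s ∈ Set.Icc (0:ℝ) 1, (s : ℂ) • z1 ∈ ball (0 : EuclideanSpace ℂ (Fin n)) η := by
    intro s hs
    rw [mem_ball_zero_iff] at hz1 ⊢
    rw [norm_smul, Complex.norm_real, Real.norm_of_nonneg hs.1]
    nlinarith [hs.2, norm_nonneg z1]
  have hptc : Continuous (fun p : ℝ × ℂ => ((p.1 : ℂ)) • z1 + p.2 • v) := by fun_prop
  have hcf : ∀ k : EuclideanSpace ℂ (Fin n) → ℂ, AnalyticOnNhd ℂ k (ball 0 ρ) →
      ContinuousOn (fun p : ℝ × ℂ => k (((p.1 : ℂ)) • z1 + p.2 • v))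
        (Set.Icc 0 1 ×ˢ closedBall 0 r) := by
    intro k hk
    refine ContinuousOn.comp (f := fun p : ℝ × ℂ => ((p.1 : ℂ)) • z1 + p.2 • v)
      hk.continuousOn hptc.continuousOn ?_
    rintro ⟨s, w⟩ ⟨hs, hw⟩
    exact hin' _ (hsz s hs) w hw
  obtain ⟨s, hs, w, hw, hroot, hsize⟩ := root_path
    (fun s w => f ((s : ℂ) • z1 + w • v) - μ * g ((s : ℂ) • z1 + w • v))
    (fun s w => ‖g ((s : ℂ) • z1 + w • v)‖) (β := β) hr
    ((hcf f hf).sub (continuousOn_const.mul (hcf g hg)))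
    (hcf g hg).norm
    (fun s hs => (hFa _ (hsz s hs)).sub (analyticOnNhd_const.mul (hGa _ (hsz s hs))))
    (by
      intro s hs w hw h
      have h1 := hsph _ (hsz s hs) w hw
      have h2 : ‖f ((s : ℂ) • z1 + w • v)‖ = l * ‖g ((s : ℂ) • z1 + w • v)‖ := by
        rw [sub_eq_zero.1 h, norm_mul, hμn]
      have h3 := mul_lt_mul_of_pos_left h1 hl
      have h4 := mul_le_mul_of_nonneg_right hlC (norm_nonneg (f ((s : ℂ) • z1 + w • v)))
      nlinarith)
    (by
      intro w hw h
      simp only [Complex.ofReal_zero, zero_smul, zero_add] at h ⊢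
      by_cases hw0 : w = 0
      · simp [hw0, hg0, hβp]
      exfalso
      have h1 := (hall hw).2.1
      have h2 := norm_pos_iff.2 ((hall hw).2.2 hw0)
      have h3 : ‖f (w • v)‖ = l * ‖g (w • v)‖ := by
        rw [sub_eq_zero.1 h, norm_mul, hμn]
      have h4 := mul_le_mul_of_nonneg_left h1 hl.le
      have h5 := mul_le_mul_of_nonneg_right hlC h2.le
      have h6 := mul_pos hl h2
      nlinarith)
    (by
      have hμm : μ ∈ M '' closedBall w0 ρ1 := hl0s (by
        rw [mem_closedBall_zero_iff, hμn]; exact hll0)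
      obtain ⟨w, hw, hwM⟩ := hμm
      refine ⟨w, hsub hw, ?_, ?_⟩
      · have := (hnice hw).1.2
        simp only [Complex.ofReal_one, one_smul]
        rw [this, hwM, sub_self]
      · have := he0le w ⟨hw, by simp [hwM, hμn]⟩
        simp only [Complex.ofReal_one, one_smul]
        exact hβe.le.trans this)
  refine ⟨(s : ℂ) • z1 + w • v, hin' _ (hsz s hs) w hw, ?_⟩
  have hroot' := sub_eq_zero.1 hroot
  rw [hroot', mul_assoc, Complex.mul_conj, Complex.normSq_eq_norm_sq, hsize, hβ2, hμ]
  have h1 : (‖t‖ : ℂ) ≠ 0 := by exact_mod_cast htp.ne'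
  have h2 : (l : ℂ) ≠ 0 := by exact_mod_cast hl.ne'
  push_cast
  field_simp

end FGbar

/-- If `f, g : ℂⁿ → ℂ` are holomorphic germs at `0` vanishing at `0`,
neither constant, with no common factor, and `f·conj g` is not constant and has an
isolated critical value at `0`, then `f·conj g` is locally surjective at `0`. -/
theorem fgbar_locally_surjective {n : ℕ}
    (f g : EuclideanSpace ℂ (Fin n) → ℂ)
    (U : Set (EuclideanSpace ℂ (Fin n))) (hU : U ∈ nhds (0 : EuclideanSpace ℂ (Fin n)))
    (hfa : DifferentiableOn ℂ f U) (hga : DifferentiableOn ℂ g U)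
    (hf0 : f 0 = 0) (hg0 : g 0 = 0)
    (hfnc : ¬ ∀ᶠ z in nhds (0 : EuclideanSpace ℂ (Fin n)), f z = 0)
    (hgnc : ¬ ∀ᶠ z in nhds (0 : EuclideanSpace ℂ (Fin n)), g z = 0)
    -- no common factor in the ring of germs of holomorphic functions at 0 :
    (hnocommon : ∀ (d q r : EuclideanSpace ℂ (Fin n) → ℂ),
      AnalyticAt ℂ d 0 → AnalyticAt ℂ q 0 → AnalyticAt ℂ r 0 →
      (f =ᶠ[nhds 0] fun z => d z * q z) → (g =ᶠ[nhds 0] fun z => d z * r z) → d 0 ≠ 0)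
    (hhnc : ¬ ∀ᶠ z in nhds (0 : EuclideanSpace ℂ (Fin n)),
      f z * (starRingEnd ℂ) (g z) = 0)
    -- isolated critical value at 0 ∈ ℂ :
    (hiso : ∃ δ > (0:ℝ), ∀ t : ℂ, t ≠ 0 → ‖t‖ < δ → ∀ x ∈ U,
      f x * (starRingEnd ℂ) (g x) = t →
      Surjective (fderiv ℝ (fun z => f z * (starRingEnd ℂ) (g z)) x)) :
    ∀ W ∈ nhds (0 : EuclideanSpace ℂ (Fin n)),
      (fun z => f z * (starRingEnd ℂ) (g z)) '' W ∈ nhds (0 : ℂ) := by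
  intro W hW
  have hUW : U ∩ W ∈ nhds (0 : EuclideanSpace ℂ (Fin n)) := Filter.inter_mem hU hW
  obtain ⟨ρ, hρ, hball⟩ := Metric.mem_nhds_iff.1 hUW
  have han : ∀ k : EuclideanSpace ℂ (Fin n) → ℂ, DifferentiableOn ℂ k U →
      AnalyticOnNhd ℂ k (Metric.ball 0 ρ) := by
    intro k hk x hx
    apply FGbar.osgood
    filter_upwards [Metric.isOpen_ball.mem_nhds hx] with y hy
    exact hk.differentiableAt (Filter.mem_of_superset (Metric.isOpen_ball.mem_nhds hy)
      (fun z hz => (hball hz).1))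
  have hf := han f hfa
  have hg := han g hga
  have h0 : (0 : EuclideanSpace ℂ (Fin n)) ∈ Metric.ball 0 ρ := Metric.mem_ball_self hρ
  have hfan := hf 0 h0
  have hgan := hg 0 h0
  -- a direction along which `f` does not vanish identically
  obtain ⟨v, hvb, hv⟩ : ∃ v ∈ Metric.ball (0 : EuclideanSpace ℂ (Fin n)) ρ, f v ≠ 0 := by
    by_contra hcon
    push Not at hcon
    exact hfnc (Filter.mem_of_superset (Metric.ball_mem_nhds 0 hρ) hcon)
  have hline : ∀ ζ : ℂ, AnalyticAt ℂ (fun ζ : ℂ => ζ • v) ζ := fun ζ =>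
    analyticAt_id.smul analyticAt_const
  have hmem : ∀ ζ ∈ Metric.closedBall (0 : ℂ) 1, ζ • v ∈ Metric.ball (0 : EuclideanSpace ℂ (Fin n)) ρ := by
    intro ζ hζ
    rw [mem_ball_zero_iff] at hvb ⊢
    rw [mem_closedBall_zero_iff] at hζ
    rw [norm_smul]
    nlinarith [norm_nonneg v]
  have hFa : AnalyticOnNhd ℂ (fun ζ : ℂ => f (ζ • v)) (Metric.closedBall 0 1) := fun ζ hζ =>
    AnalyticAt.comp (f := fun ζ : ℂ => ζ • v) (hf _ (hmem ζ hζ)) (hline ζ)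
  have hGa : AnalyticOnNhd ℂ (fun ζ : ℂ => g (ζ • v)) (Metric.closedBall 0 1) := fun ζ hζ =>
    AnalyticAt.comp (f := fun ζ : ℂ => ζ • v) (hg _ (hmem ζ hζ)) (hline ζ)
  have hz0 : (0 : ℂ) ∈ Metric.closedBall (0 : ℂ) 1 := by simp
  have hFp : ∀ᶠ ζ : ℂ in nhdsWithin 0 {0}ᶜ, f (ζ • v) ≠ 0 := by
    by_contra hcon
    have h1 : ∃ᶠ ζ : ℂ in nhdsWithin 0 {0}ᶜ, f (ζ • v) = 0 := fun h => hcon h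
    have h2 := hFa.eqOn_zero_of_preconnected_of_frequently_eq_zero
      (convex_closedBall (0:ℂ) 1).isPreconnected hz0 h1
    have h3 := h2 (show (1 : ℂ) ∈ Metric.closedBall (0 : ℂ) 1 by simp)
    simp at h3
    exact hv h3
  have hbound : ∀ (a b q : ℂ → ℂ), AnalyticAt ℂ q 0 → (∀ᶠ ζ in nhds 0, b ζ = a ζ * q ζ) →
      ∀ᶠ ζ in nhds 0, ‖b ζ‖ ≤ (‖q 0‖ + 1) * ‖a ζ‖ := by
    intro a b q hq hab
    have hlt := hq.continuousAt.norm.eventually_lt_const (show ‖q 0‖ < ‖q 0‖ + 1 by linarith)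
    filter_upwards [hab, hlt] with ζ h1 h2
    rw [h1, norm_mul, mul_comm]
    exact mul_le_mul_of_nonneg_right h2.le (norm_nonneg _)
  rcases FGbar.compare (hFa 0 hz0) (hGa 0 hz0) (FGbar.not_ev_zero hFp) with
    ⟨q, hq, hGq⟩ | ⟨M, hM, hM0, hFM⟩
  · obtain ⟨ε, hε, hcov⟩ := FGbar.core f g v hρ hf hg hg0 (C := ‖q 0‖ + 1) (by positivity)
      (hbound _ _ q hq hGq) hFp (by
        rintro ⟨d, hd, hgd⟩
        refine hnocommon f (fun _ => 1) d hfan analyticAt_const hd ?_ hgd hf0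
        exact Filter.Eventually.of_forall fun z => by simp)
    refine Metric.mem_nhds_iff.2 ⟨ε, hε, fun t ht => ?_⟩
    obtain ⟨x, hx, hxt⟩ := hcov t (mem_ball_zero_iff.1 ht)
    exact ⟨x, (hball hx).2, hxt⟩
  · have hGp : ∀ᶠ ζ : ℂ in nhdsWithin 0 {0}ᶜ, g (ζ • v) ≠ 0 := by
      filter_upwards [hFp, hFM.filter_mono nhdsWithin_le_nhds] with ζ h1 h2 h3
      apply h1
      rw [h2, h3, mul_zero]
    obtain ⟨ε, hε, hcov⟩ := FGbar.core g f v hρ hg hf hf0 (C := ‖M 0‖ + 1) (by positivity)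
      (hbound _ _ M hM (by filter_upwards [hFM] with ζ h; rw [h, mul_comm])) hGp (by
        rintro ⟨d, hd, hgd⟩
        refine hnocommon g d (fun _ => 1) hgan hd analyticAt_const hgd ?_ hg0
        exact Filter.Eventually.of_forall fun z => by simp)
    refine Metric.mem_nhds_iff.2 ⟨ε, hε, fun t ht => ?_⟩
    obtain ⟨x, hx, hxt⟩ := hcov ((starRingEnd ℂ) t) (by
      rw [RCLike.norm_conj]; exact mem_ball_zero_iff.1 ht)
    refine ⟨x, (hball hx).2, ?_⟩
    have := congrArg (starRingEnd ℂ) hxt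
    simp only [map_mul, Complex.conj_conj] at this
    change f x * (starRingEnd ℂ) (g x) = t
    rw [← this, mul_comm]
end

section
/- Let f, g : ℂ² → ℂ be holomorphic map-germs at 0 with f(0) = g(0) = 0, neither constant and with no common irreducible factor. Then the map-germ (f, g) : ℂ² → ℂ² is locally surjective at 0: the image of every neighbourhood of 0 in ℂ² contains a neighbourhood of (0,0) in ℂ². -/
open Filter Function
namespace PLS
open Metric Complex Topology

/-- restriction of a function to the circle of radius `r`, as a continuous map. -/
noncomputable def circ (r : ℝ) (h : ℂ → ℂ) : C(sphere (0:ℂ) r, ℂ) :=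
  open Classical in
  if hc : Continuous (fun ζ : sphere (0:ℂ) r => h ζ) then ⟨_, hc⟩ else 0

lemma circ_apply {r : ℝ} {h : ℂ → ℂ} (hc : ContinuousOn h (sphere 0 r)) (ζ : sphere (0:ℂ) r) :
    circ r h ζ = h ζ := by
  have : Continuous (fun ζ : sphere (0:ℂ) r => h ζ) := continuousOn_iff_continuous_domRestrict.1 hc
  simp [circ, this]

lemma circ_continuousOn {E : Type*} [TopologicalSpace E] {r : ℝ} {K : Set E} {f : E → ℂ → ℂ}
    (hf : ContinuousOn (fun p : E × ℂ => f p.1 p.2) (K ×ˢ sphere 0 r)) :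
    ContinuousOn (fun z => circ r (f z)) K := by
  rw [continuousOn_iff_continuous_domRestrict]
  have h1 : Continuous (fun p : K × sphere (0:ℂ) r => f p.1 p.2) := by
    have : Continuous (fun p : K × sphere (0:ℂ) r => ((p.1 : E), (p.2 : ℂ))) := by fun_prop
    exact hf.comp_continuous this (fun p => ⟨p.1.2, p.2.2⟩)
  have h2 := (ContinuousMap.curry ⟨_, h1⟩).continuous
  convert h2 using 1
  ext z ζ
  have : ContinuousOn (f z) (sphere 0 r) :=
    hf.comp (f := fun w => ((z : E), w)) (by fun_prop) (fun w hw => ⟨z.2, hw⟩)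
  simp [circ_apply this]

lemma circ_analytic {r δ : ℝ} (hδ : 0 < δ) {f : ℂ → ℂ → ℂ}
    (hf : ContinuousOn (fun p : ℂ × ℂ => f p.1 p.2) (closedBall 0 δ ×ˢ sphere 0 r))
    (hd : ∀ ζ ∈ sphere (0:ℂ) r, DifferentiableOn ℂ (fun z => f z ζ) (closedBall 0 δ)) :
    AnalyticAt ℂ (fun z => circ r (f z)) 0 := by
  have hc := circ_continuousOn hf
  have hci : CircleIntegrable (fun z => circ r (f z)) 0 δ :=
    (hc.mono sphere_subset_closedBall).circleIntegrable hδ.le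
  lift δ to NNReal using hδ.le
  have h := (hasFPowerSeriesOn_cauchy_integral hci (by exact_mod_cast hδ)).analyticAt
  refine h.congr ?_
  filter_upwards [ball_mem_nhds (0:ℂ) hδ] with z hz
  ext ζ
  have hcz : ∀ z ∈ closedBall (0:ℂ) δ, ContinuousOn (f z) (sphere 0 r) := fun z hz =>
    hf.comp (f := fun w => ((z : ℂ), w)) (by fun_prop) (fun w hw => ⟨hz, hw⟩)
  rw [circ_apply (hcz z (ball_subset_closedBall hz))]
  have := (hd ζ ζ.2).circleIntegral_sub_inv_smul hz
  rw [ContinuousMap.smul_apply]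
  have e : (∮ w in C(0, δ), (w - z)⁻¹ • circ r (f w)) ζ = ∮ w in C(0, δ), (w - z)⁻¹ • f w ζ := by
    have hCI : CircleIntegrable (fun w => (w - z)⁻¹ • circ r (f w)) 0 δ := by
      apply ContinuousOn.circleIntegrable hδ.le
      apply ContinuousOn.fun_smul
      · apply ContinuousOn.inv₀ (by fun_prop)
        intro x hx h0
        rw [sub_eq_zero] at h0
        subst h0
        rw [mem_ball] at hz
        rw [mem_sphere] at hx
        linarith
      · exact hc.mono sphere_subset_closedBall
    have := (ContinuousMap.evalCLM ℂ ζ).intervalIntegral_comp_comm hCI.out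
    unfold circleIntegral
    refine Eq.trans (Eq.symm (this.trans ?_)) ?_
    · rfl
    refine intervalIntegral.integral_congr fun θ _ => ?_
    have hm : circleMap 0 δ θ ∈ closedBall (0:ℂ) δ := circleMap_mem_closedBall 0 hδ.le θ
    simp [circ_apply (hcz _ hm)]
  rw [e, this, smul_smul, inv_mul_cancel₀ two_pi_I_ne_zero, one_smul]

/-- the functional `(2πi)⁻¹ ∮`. -/
lemma exists_circ_functional {r : ℝ} (hr : 0 < r) : ∃ I : C(sphere (0:ℂ) r, ℂ) →L[ℂ] ℂ,
    ∀ φ : C(sphere (0:ℂ) r, ℂ), ∀ h : ℂ → ℂ, (∀ ζ : sphere (0:ℂ) r, φ ζ = h ζ) →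
      I φ = (2 * Real.pi * Complex.I)⁻¹ • ∮ z in C(0, r), h z := by
  have hm : ∀ θ, circleMap 0 r θ ∈ sphere (0:ℂ) r := fun θ => circleMap_mem_sphere 0 hr.le θ
  have hcm : Continuous (fun θ => (⟨circleMap 0 r θ, hm θ⟩ : sphere (0:ℂ) r)) := by
    exact Continuous.subtype_mk (continuous_circleMap 0 r) _
  have hcd : Continuous (deriv (circleMap 0 r)) := by
    rw [show deriv (circleMap 0 r) = fun θ => circleMap 0 r θ * Complex.I from funext (fun θ => by simp)]
    exact (continuous_circleMap 0 r).mul continuous_const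
  let J : C(sphere (0:ℂ) r, ℂ) →ₗ[ℂ] ℂ :=
    { toFun := fun φ => ∫ θ in (0:ℝ)..2*Real.pi, deriv (circleMap 0 r) θ • φ ⟨circleMap 0 r θ, hm θ⟩
      map_add' := by
        intro φ ψ
        simp only [ContinuousMap.add_apply, smul_add]
        apply intervalIntegral.integral_add
        · exact (hcd.smul (φ.continuous.comp hcm)).intervalIntegrable _ _
        · exact (hcd.smul (ψ.continuous.comp hcm)).intervalIntegrable _ _
      map_smul' := by
        intro c φ
        simp only [ContinuousMap.smul_apply, RingHom.id_apply]
        rw [← intervalIntegral.integral_smul]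
        congr 1
        ext θ
        simp; ring }
  let J' : C(sphere (0:ℂ) r, ℂ) →L[ℂ] ℂ := J.mkContinuous (r * (2 * Real.pi)) (by
    intro φ
    have : ‖J φ‖ ≤ (r * ‖φ‖) * |2 * Real.pi - 0| := by
      apply intervalIntegral.norm_integral_le_of_norm_le_const
      intro θ _
      rw [norm_smul]
      gcongr
      · simp [abs_of_pos hr]
      · exact φ.norm_coe_le_norm _
    rw [sub_zero, abs_of_pos Real.two_pi_pos] at this
    linarith)
  refine ⟨(2 * Real.pi * Complex.I)⁻¹ • J', fun φ h hφ => ?_⟩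
  simp only [_root_.smul_apply]
  congr 1
  change (∫ θ in (0:ℝ)..2*Real.pi, deriv (circleMap 0 r) θ • φ ⟨circleMap 0 r θ, hm θ⟩) = _
  unfold circleIntegral
  simp [hφ]

end PLS

namespace PLS
open Metric Complex Topology

lemma factor_zeros {r : ℝ} (hr : 0 < r) {h : ℂ → ℂ} (hh : AnalyticOnNhd ℂ h (closedBall 0 r))
    (h0 : ∀ ζ ∈ sphere (0:ℂ) r, h ζ ≠ 0) :
    ∃ (m : ℕ) (y : Fin m → ℂ) (u : ℂ → ℂ), AnalyticOnNhd ℂ u (closedBall 0 r) ∧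
      (∀ w ∈ closedBall (0:ℂ) r, u w ≠ 0) ∧ (∀ i, y i ∈ ball (0:ℂ) r) ∧
      ∀ w ∈ closedBall (0:ℂ) r, h =ᶠ[𝓝 w] fun w => (∏ i, (w - y i)) * u w := by
  have hpre : IsPreconnected (closedBall (0:ℂ) r) := (convex_closedBall 0 r).isPreconnected
  have hrs : (r:ℂ) ∈ sphere (0:ℂ) r := by simp [abs_of_pos hr]
  have hacc : ∀ w ∈ closedBall (0:ℂ) r, AccPt w (𝓟 (closedBall (0:ℂ) r)) := by
    refine hpre.preperfect_of_nontrivial ⟨0, by simp [hr.le], r, sphere_subset_closedBall hrs, ?_⟩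
    exact_mod_cast hr.ne
  have h2 : ∀ u : closedBall (0:ℂ) r, meromorphicOrderAt h u ≠ ⊤ := by
    intro u hu
    rw [meromorphicOrderAt_eq_top_iff] at hu
    have h3 := hh.eqOn_zero_of_preconnected_of_frequently_eq_zero hpre u.2 hu.frequently
    exact h0 r hrs (h3 (sphere_subset_closedBall hrs))
  have hfin := (MeromorphicOn.divisor h (closedBall (0:ℂ) r)).finiteSupport (isCompact_closedBall 0 r)
  obtain ⟨u, hu, hu0, hEq⟩ := hh.meromorphicOn.extract_zeros_poles h2 hfin
  set D := MeromorphicOn.divisor h (closedBall (0:ℂ) r) with hD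
  have hDn : 0 ≤ D := MeromorphicOn.AnalyticOnNhd.divisor_nonneg hh
  let s : Multiset ℂ := ∑ p ∈ hfin.toFinset, Multiset.replicate (D p).toNat p
  have hs : ∀ w, (∏ᶠ p, (fun w : ℂ => w - p) ^ D p) w = (s.map (fun p => w - p)).prod := by
    intro w
    rw [finprod_eq_prod_of_mulSupport_subset (s := hfin.toFinset), Finset.prod_apply]
    · have e : s.map (fun p => w - p) =
          ∑ p ∈ hfin.toFinset, Multiset.replicate (D p).toNat (w - p) := by
        change Multiset.mapAddMonoidHom (fun p => w - p) s = _
        simp only [s, map_sum, Multiset.coe_mapAddMonoidHom, Multiset.map_replicate]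
      rw [e, Multiset.prod_sum]
      simp only [Multiset.prod_replicate]
      refine Finset.prod_congr rfl fun p _ => ?_
      rw [Pi.pow_apply, ← zpow_natCast, Int.toNat_of_nonneg (hDn p)]
    · intro p hp
      simp only [Set.Finite.coe_toFinset]
      by_contra hc
      apply hp
      rw [Function.notMem_support] at hc
      simp [hc]
  let l := s.toList
  have hl : ∀ w, (s.map (fun p => w - p)).prod = ∏ i : Fin l.length, (w - l.get i) := by
    intro w
    rw [← List.prod_ofFn]
    have : List.ofFn (fun i : Fin l.length => w - l.get i) = l.map (fun p => w - p) := by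
      apply List.ext_get <;> simp
    rw [this, ← Multiset.prod_coe, ← Multiset.map_coe]
    simp [l]
  have hmem : ∀ i : Fin l.length, l.get i ∈ closedBall (0:ℂ) r := by
    intro i
    have h1 : l.get i ∈ s := by
      rw [← Multiset.mem_toList]; exact List.get_mem _ _
    simp only [s, Multiset.mem_sum] at h1
    obtain ⟨p, hp, hp2⟩ := h1
    rw [Multiset.eq_of_mem_replicate hp2]
    exact D.supportWithinDomain (by simpa using hp)
  have key : ∀ w ∈ closedBall (0:ℂ) r,
      h =ᶠ[𝓝 w] fun w => (∏ i : Fin l.length, (w - l.get i)) * u w := by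
    intro w hw
    have ha : AnalyticAt ℂ (fun w => (∏ i : Fin l.length, (w - l.get i)) * u w) w := by
      refine AnalyticAt.mul ?_ (hu w hw)
      apply Finset.analyticAt_fun_prod
      intro i _
      fun_prop
    refine (AnalyticAt.frequently_eq_iff_eventually_eq (hh w hw) ha).1 ?_
    have hE := mem_codiscreteWithin.1 hEq w hw
    rw [Filter.disjoint_principal_right] at hE
    have := accPt_iff_frequently_nhdsNE.1 (hacc w hw)
    refine (this.and_eventually hE).mono ?_
    rintro z ⟨hz, hz2⟩
    simp only [Set.mem_sdiff, not_and, not_not] at hz2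
    have := hz2 hz
    simp only [Set.mem_ofPred_eq, Pi.smul_apply', smul_eq_mul] at this
    rw [this, hs, hl]
  refine ⟨l.length, l.get, u, hu, fun w hw => hu0 ⟨w, hw⟩, fun i => ?_, key⟩
  have h1 := (key _ (hmem i)).self_of_nhds
  have h2 : h (l.get i) = 0 := by
    rw [h1]
    simp only [mul_eq_zero]
    left
    exact Finset.prod_eq_zero (Finset.mem_univ i) (sub_self _)
  have h3 := hmem i
  rw [← ball_union_sphere] at h3
  rcases h3 with h3 | h3
  · exact h3
  · exact absurd h2 (h0 _ h3)

lemma sum_zeros {r : ℝ} (hr : 0 < r) {h u : ℂ → ℂ} {m : ℕ} {y : Fin m → ℂ}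
    (hu : AnalyticOnNhd ℂ u (closedBall 0 r))
    (hu0 : ∀ w ∈ closedBall (0:ℂ) r, u w ≠ 0) (hy : ∀ i, y i ∈ ball (0:ℂ) r)
    (hE : ∀ w ∈ closedBall (0:ℂ) r, h =ᶠ[𝓝 w] fun w => (∏ i, (w - y i)) * u w)
    {φ : ℂ → ℂ} (hφ : DifferentiableOn ℂ φ (closedBall 0 r)) :
    (2 * Real.pi * Complex.I)⁻¹ • (∮ z in C(0, r), φ z * (deriv h z * (h z)⁻¹)) = ∑ i, φ (y i) := by
  have hne : ∀ z ∈ sphere (0:ℂ) r, ∀ i, z - y i ≠ 0 := by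
    intro z hz i h0
    rw [sub_eq_zero] at h0
    have := hy i
    rw [← h0, mem_ball] at this
    rw [mem_sphere] at hz
    linarith
  have hdu : DifferentiableOn ℂ (deriv u) (closedBall 0 r) := hu.deriv.differentiableOn
  have h1 : ∀ z ∈ sphere (0:ℂ) r, φ z * (deriv h z * (h z)⁻¹) =
      (∑ i, (z - y i)⁻¹ • φ z) + φ z * (deriv u z * (u z)⁻¹) := by
    intro z hz
    have hzc := sphere_subset_closedBall hz
    have e1 : deriv h z * (h z)⁻¹ = logDeriv (fun w => (∏ i, (w - y i)) * u w) z := by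
      rw [logDeriv_apply, ← (hE z hzc).deriv_eq, div_eq_mul_inv, (hE z hzc).self_of_nhds]
    rw [e1, logDeriv_mul z (Finset.prod_ne_zero_iff.2 fun i _ => hne z hz i) (hu0 z hzc)
      (by fun_prop) (hu z hzc).differentiableAt,
      logDeriv_prod (fun i _ => hne z hz i) (fun i _ => by fun_prop)]
    simp only [logDeriv_apply, deriv_sub_const, deriv_id'', mul_add, Finset.mul_sum, smul_eq_mul]
    congr 1
    · refine Finset.sum_congr rfl fun i _ => by simp; ring
  rw [circleIntegral.integral_congr hr.le h1, circleIntegral.integral_add,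
    circleIntegral.integral_fun_sum]
  · have e2 : ∀ i, (∮ z in C(0, r), (z - y i)⁻¹ • φ z) = (2 * Real.pi * Complex.I) • φ (y i) :=
      fun i => hφ.circleIntegral_sub_inv_smul (hy i)
    have e3 : (∮ z in C(0, r), φ z * (deriv u z * (u z)⁻¹)) = 0 := by
      apply DiffContOnCl.circleIntegral_eq_zero hr.le
      apply DifferentiableOn.diffContOnCl
      rw [closure_ball _ hr.ne']
      exact hφ.mul (hdu.mul (hu.differentiableOn.inv hu0))
    simp only [e2, e3, add_zero, ← Finset.smul_sum, smul_smul]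
    rw [inv_mul_cancel₀ two_pi_I_ne_zero, one_smul]
  · intro i _
    apply ContinuousOn.circleIntegrable hr.le
    refine ContinuousOn.fun_smul (ContinuousOn.inv₀ (by fun_prop) fun z hz => hne z hz i) ?_
    exact hφ.continuousOn.mono sphere_subset_closedBall
  · apply ContinuousOn.circleIntegrable hr.le
    refine continuousOn_finsetSum _ fun i _ => ?_
    refine ContinuousOn.fun_smul (ContinuousOn.inv₀ (by fun_prop) fun z hz => hne z hz i) ?_
    exact hφ.continuousOn.mono sphere_subset_closedBall
  · apply ContinuousOn.circleIntegrable hr.le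
    exact ((hφ.mul (hdu.mul (hu.differentiableOn.inv hu0))).continuousOn).mono
      sphere_subset_closedBall

lemma newton {E : Type*} [NormedAddCommGroup E] [NormedSpace ℂ E] {m : ℕ} {y : E → Fin m → ℂ}
    {e0 : E} (h : ∀ k : ℕ, AnalyticAt ℂ (fun e => ∑ i, (y e i) ^ k) e0) (k : ℕ) :
    AnalyticAt ℂ (fun e => MvPolynomial.aeval (y e) (MvPolynomial.esymm (Fin m) ℂ k)) e0 := by
  induction k using Nat.strong_induction_on with
  | _ k ih =>
  rcases Nat.eq_zero_or_pos k with rfl | hk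
  · simp only [MvPolynomial.esymm_zero, map_one]
    exact analyticAt_const
  have hk0 : (k:ℂ) ≠ 0 := by exact_mod_cast hk.ne'
  have e : (fun e => MvPolynomial.aeval (y e) (MvPolynomial.esymm (Fin m) ℂ k)) = fun e =>
      (k:ℂ)⁻¹ * ((-1) ^ (k + 1) * ∑ a ∈ Finset.HasAntidiagonal.antidiagonal k with a.1 < k,
        (-1) ^ a.1 * MvPolynomial.aeval (y e) (MvPolynomial.esymm (Fin m) ℂ a.1) *
          ∑ i, (y e i) ^ a.2) := by
    ext e
    have := congrArg (MvPolynomial.aeval (y e)) (MvPolynomial.mul_esymm_eq_sum (Fin m) ℂ k)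
    simp only [map_mul, map_natCast, map_pow, map_neg, map_one, map_sum, MvPolynomial.psum,
      MvPolynomial.aeval_X] at this
    rw [← this, inv_mul_cancel_left₀ hk0]
  rw [e]
  refine analyticAt_const.mul (analyticAt_const.mul ?_)
  apply Finset.analyticAt_fun_sum
  intro a ha
  exact (analyticAt_const.mul (ih a.1 (Finset.mem_filter.1 ha).2)).mul (h a.2)

end PLS

namespace PLS
open Metric Complex Topology

lemma inverse_apply {r : ℝ} {G : C(sphere (0:ℂ) r, ℂ)} (hG : IsUnit G) (ζ : sphere (0:ℂ) r) :
    (Ring.inverse G) ζ = (G ζ)⁻¹ := by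
  have h := congrArg (fun φ : C(sphere (0:ℂ) r, ℂ) => φ ζ) (Ring.mul_inverse_cancel G hG)
  simp only [ContinuousMap.mul_apply, ContinuousMap.one_apply] at h
  exact eq_inv_of_mul_eq_one_right h

lemma analyticAt_ringInverse {E : Type*} [NormedAddCommGroup E] [NormedSpace ℂ E] {r : ℝ}
    {F : E → C(sphere (0:ℂ) r, ℂ)} {e : E} (hF : AnalyticAt ℂ F e) (hu : IsUnit (F e)) :
    AnalyticAt ℂ (fun e => Ring.inverse (F e)) e := by
  obtain ⟨v, hv⟩ := hu
  have := analyticAt_inverse (𝕜 := ℂ) v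
  rw [hv] at this
  exact this.fun_comp hF

lemma eventually_isUnit {E : Type*} [NormedAddCommGroup E] [NormedSpace ℂ E] {r : ℝ}
    {F : E → C(sphere (0:ℂ) r, ℂ)} {e : E} (hF : AnalyticAt ℂ F e) (hu : IsUnit (F e)) :
    ∀ᶠ e in 𝓝 e, IsUnit (F e) :=
  hF.continuousAt.eventually (Units.isOpen.mem_nhds hu)

lemma count {E : Type*} [NormedAddCommGroup E] [NormedSpace ℂ E] {r : ℝ} (hr : 0 < r)
    {h : E → ℂ → ℂ} {F F' : E → C(sphere (0:ℂ) r, ℂ)} (hF : AnalyticAt ℂ F 0)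
    (hF' : AnalyticAt ℂ F' 0) (hh : ∀ᶠ e in 𝓝 (0:E), AnalyticOnNhd ℂ (h e) (closedBall 0 r))
    (hFe : ∀ᶠ e in 𝓝 (0:E), ∀ ζ, F e ζ = h e ζ)
    (hFe' : ∀ᶠ e in 𝓝 (0:E), ∀ ζ, F' e ζ = deriv (h e) ζ)
    (h0 : ∀ ζ ∈ sphere (0:ℂ) r, h 0 ζ ≠ 0) :
    ∃ (m : ℕ) (y : E → Fin m → ℂ) (u : E → ℂ → ℂ),
      (∀ᶠ e in 𝓝 (0:E), AnalyticOnNhd ℂ (u e) (closedBall 0 r) ∧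
        (∀ w ∈ closedBall (0:ℂ) r, u e w ≠ 0) ∧ (∀ i, y e i ∈ ball (0:ℂ) r) ∧
        ∀ w ∈ closedBall (0:ℂ) r, h e =ᶠ[𝓝 w] fun w => (∏ i, (w - y e i)) * u e w) ∧
      ∀ (Φ : E → C(sphere (0:ℂ) r, ℂ)) (φ : E → ℂ → ℂ), AnalyticAt ℂ Φ 0 →
        (∀ᶠ e in 𝓝 (0:E), DifferentiableOn ℂ (φ e) (closedBall 0 r)) →
        (∀ᶠ e in 𝓝 (0:E), ∀ ζ, Φ e ζ = φ e ζ) →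
        AnalyticAt ℂ (fun e => ∑ i, φ e (y e i)) 0 := by
  obtain ⟨I, hI⟩ := exists_circ_functional hr
  have hu0 : IsUnit (F 0) := by
    rw [ContinuousMap.isUnit_iff_forall_ne_zero]
    intro ζ
    rw [hFe.self_of_nhds]
    exact h0 ζ ζ.2
  have hu := eventually_isUnit hF hu0
  have hG : AnalyticAt ℂ (fun e => F' e * Ring.inverse (F e)) 0 :=
    hF'.mul (analyticAt_ringInverse hF hu0)
  have hgood : ∀ᶠ e in 𝓝 (0:E), ∃ (m : ℕ) (y : Fin m → ℂ) (u : ℂ → ℂ),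
      AnalyticOnNhd ℂ u (closedBall 0 r) ∧
      (∀ w ∈ closedBall (0:ℂ) r, u w ≠ 0) ∧ (∀ i, y i ∈ ball (0:ℂ) r) ∧
      ∀ w ∈ closedBall (0:ℂ) r, h e =ᶠ[𝓝 w] fun w => (∏ i, (w - y i)) * u w := by
    filter_upwards [hh, hu, hFe] with e h1 h2 h3
    apply factor_zeros hr h1
    intro ζ hζ
    rw [← h3 ⟨ζ, hζ⟩]
    exact (ContinuousMap.isUnit_iff_forall_ne_zero _).1 h2 _
  have hsum : ∀ᶠ e in 𝓝 (0:E), ∀ (m : ℕ) (y : Fin m → ℂ) (u : ℂ → ℂ),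
      AnalyticOnNhd ℂ u (closedBall 0 r) →
      (∀ w ∈ closedBall (0:ℂ) r, u w ≠ 0) → (∀ i, y i ∈ ball (0:ℂ) r) →
      (∀ w ∈ closedBall (0:ℂ) r, h e =ᶠ[𝓝 w] fun w => (∏ i, (w - y i)) * u w) →
      ∀ (Φ : C(sphere (0:ℂ) r, ℂ)) (φ : ℂ → ℂ), DifferentiableOn ℂ φ (closedBall 0 r) →
      (∀ ζ, Φ ζ = φ ζ) → I (Φ * (F' e * Ring.inverse (F e))) = ∑ i, φ (y i) := by
    filter_upwards [hu, hFe, hFe'] with e h2 h3 h4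
    intro m y u a1 a2 a3 a4 Φ φ hφ hΦ
    rw [← sum_zeros hr a1 a2 a3 a4 hφ]
    apply hI
    intro ζ
    simp only [ContinuousMap.mul_apply, inverse_apply h2, h3, h4, hΦ]
  obtain ⟨m, y0, u0, b1, b2, b3, b4⟩ := hgood.self_of_nhds
  have hm0 : I (1 * (F' 0 * Ring.inverse (F 0))) = m := by
    rw [hsum.self_of_nhds m y0 u0 b1 b2 b3 b4 1 (fun _ => 1) (by fun_prop) (by simp)]
    simp
  have hNc : ContinuousAt (fun e => I (1 * (F' e * Ring.inverse (F e)))) 0 :=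
    I.continuous.continuousAt.comp (continuousAt_const.mul hG.continuousAt)
  have hclose : ∀ᶠ e in 𝓝 (0:E), dist (I (1 * (F' e * Ring.inverse (F e)))) m < 1 := by
    rw [← hm0]
    exact hNc.eventually (ball_mem_nhds _ one_pos)
  have hgood2 : ∀ᶠ e in 𝓝 (0:E), ∃ (y : Fin m → ℂ) (u : ℂ → ℂ),
      AnalyticOnNhd ℂ u (closedBall 0 r) ∧
      (∀ w ∈ closedBall (0:ℂ) r, u w ≠ 0) ∧ (∀ i, y i ∈ ball (0:ℂ) r) ∧
      ∀ w ∈ closedBall (0:ℂ) r, h e =ᶠ[𝓝 w] fun w => (∏ i, (w - y i)) * u w := by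
    filter_upwards [hgood, hsum, hclose] with e h1 h2 h3
    obtain ⟨m', y, u, c1, c2, c3, c4⟩ := h1
    have := h2 m' y u c1 c2 c3 c4 1 (fun _ => 1) (by fun_prop) (by simp)
    rw [this] at h3
    have hmm : m' = m := by
      simp only [Finset.sum_const, Finset.card_univ, Fintype.card_fin, nsmul_eq_mul, mul_one] at h3
      have h5 : dist ((m' : ℤ)) (m : ℤ) < 1 := by
        rw [dist_eq_norm] at h3 ⊢
        rw [← Int.norm_cast_real]
        rw [← Complex.norm_real]
        push_cast
        exact h3
      by_contra hne
      have h6 : (m' : ℤ) ≠ m := by exact_mod_cast hne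
      have := Int.pairwise_one_le_dist h6
      linarith
    subst hmm
    exact ⟨y, u, c1, c2, c3, c4⟩
  have hex : ∀ e : E, ∃ (y : Fin m → ℂ) (u : ℂ → ℂ), (∃ (y : Fin m → ℂ) (u : ℂ → ℂ),
      AnalyticOnNhd ℂ u (closedBall 0 r) ∧
      (∀ w ∈ closedBall (0:ℂ) r, u w ≠ 0) ∧ (∀ i, y i ∈ ball (0:ℂ) r) ∧
      ∀ w ∈ closedBall (0:ℂ) r, h e =ᶠ[𝓝 w] fun w => (∏ i, (w - y i)) * u w) →
      AnalyticOnNhd ℂ u (closedBall 0 r) ∧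
      (∀ w ∈ closedBall (0:ℂ) r, u w ≠ 0) ∧ (∀ i, y i ∈ ball (0:ℂ) r) ∧
      ∀ w ∈ closedBall (0:ℂ) r, h e =ᶠ[𝓝 w] fun w => (∏ i, (w - y i)) * u w := by
    intro e
    by_cases hc : (∃ (y : Fin m → ℂ) (u : ℂ → ℂ),
      AnalyticOnNhd ℂ u (closedBall 0 r) ∧
      (∀ w ∈ closedBall (0:ℂ) r, u w ≠ 0) ∧ (∀ i, y i ∈ ball (0:ℂ) r) ∧
      ∀ w ∈ closedBall (0:ℂ) r, h e =ᶠ[𝓝 w] fun w => (∏ i, (w - y i)) * u w)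
    · obtain ⟨y, u, hyu⟩ := hc
      exact ⟨y, u, fun _ => hyu⟩
    · exact ⟨fun _ => 0, fun _ => 0, fun hc' => absurd hc' hc⟩
  choose y u hyu using hex
  refine ⟨m, y, u, hgood2.mono fun e he => hyu e he, ?_⟩
  intro Φ φ hΦ hφ hΦφ
  have : AnalyticAt ℂ (fun e => I (Φ e * (F' e * Ring.inverse (F e)))) 0 :=
    (I.analyticAt _).fun_comp (hΦ.mul hG)
  refine this.congr ?_
  filter_upwards [hgood2, hsum, hφ, hΦφ] with e h1 h2 h3 h4
  obtain ⟨c1, c2, c3, c4⟩ := hyu e h1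
  exact h2 m _ _ c1 c2 c3 c4 _ _ h3 h4

lemma cauchy_joint {r : ℝ} (hr : 0 < r) {u : ℂ → ℂ → ℂ} {F : ℂ → C(sphere (0:ℂ) r, ℂ)}
    (hF : AnalyticAt ℂ F 0) (hu : ∀ᶠ z in 𝓝 (0:ℂ), DifferentiableOn ℂ (u z) (closedBall 0 r))
    (hFu : ∀ᶠ z in 𝓝 (0:ℂ), ∀ ζ, F z ζ = u z ζ) :
    AnalyticAt ℂ (fun p : ℂ × ℂ => u p.1 p.2) 0 := by
  obtain ⟨I, hI⟩ := exists_circ_functional hr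
  let G : ℂ × ℂ → C(sphere (0:ℂ) r, ℂ) := fun p => circ r id - p.2 • 1
  have hGa : ∀ p (ζ : sphere (0:ℂ) r), G p ζ = ζ - p.2 := by
    intro p ζ
    simp [G, circ_apply (continuous_id.continuousOn)]
  have hG : AnalyticAt ℂ G 0 := analyticAt_const.sub (analyticAt_snd.smul analyticAt_const)
  have hG0 : IsUnit (G 0) := by
    rw [ContinuousMap.isUnit_iff_forall_ne_zero]
    intro ζ
    rw [hGa]
    intro h
    have h2 := ζ.2
    simp only [Prod.snd_zero, sub_zero] at h
    rw [h] at h2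
    simp [hr.ne] at h2
  have hGu := eventually_isUnit hG hG0
  have hF2 : AnalyticAt ℂ (fun p : ℂ × ℂ => F p.1) 0 := by
    have : AnalyticAt ℂ F (0 : ℂ × ℂ).1 := hF
    exact this.fun_comp analyticAt_fst
  have hA : AnalyticAt ℂ (fun p : ℂ × ℂ => I (Ring.inverse (G p) * F p.1)) 0 :=
    (I.analyticAt _).fun_comp ((analyticAt_ringInverse hG hG0).mul hF2)
  refine hA.congr ?_
  have hf : Tendsto (fun p : ℂ × ℂ => p.1) (𝓝 0) (𝓝 0) := continuous_fst.tendsto (0 : ℂ × ℂ)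
  have hs : Tendsto (fun p : ℂ × ℂ => p.2) (𝓝 0) (𝓝 0) := continuous_snd.tendsto (0 : ℂ × ℂ)
  filter_upwards [hf.eventually hu, hf.eventually hFu, hs.eventually (ball_mem_nhds 0 hr), hGu]
    with p h1 h2 h3 h4
  rw [hI _ (fun z => (z - p.2)⁻¹ • u p.1 z)]
  · rw [h1.circleIntegral_sub_inv_smul h3, smul_smul, inv_mul_cancel₀ two_pi_I_ne_zero, one_smul]
  · intro ζ
    simp [inverse_apply h4, hGa, h2]

/-- Osgood lemma -/
lemma osgood {f : ℂ × ℂ → ℂ} {U : Set (ℂ × ℂ)} (hU : U ∈ 𝓝 0) (hf : DifferentiableOn ℂ f U) :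
    AnalyticAt ℂ f 0 := by
  obtain ⟨ε, hε, hεU⟩ := Metric.mem_nhds_iff.1 hU
  have hsub : closedBall (0:ℂ) (ε/2) ×ˢ closedBall (0:ℂ) (ε/2) ⊆ U := by
    rw [closedBall_prod_same]
    exact (closedBall_subset_ball (by linarith)).trans hεU
  have h2 : 0 < ε / 2 := by linarith
  have hF := circ_analytic (r := ε / 2) h2 (f := fun z w => f (z, w))
    (hf.continuousOn.mono ((Set.prod_mono subset_rfl sphere_subset_closedBall).trans hsub))
    (fun ζ hζ => hf.comp (f := fun z => (z, ζ)) (by fun_prop)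
      (fun z hz => hsub ⟨hz, sphere_subset_closedBall hζ⟩))
  have hd : ∀ z ∈ closedBall (0:ℂ) (ε/2),
      DifferentiableOn ℂ (fun w => f (z, w)) (closedBall 0 (ε/2)) := fun z hz =>
    hf.comp (f := fun w => (z, w)) (by fun_prop) (fun w hw => hsub ⟨hz, hw⟩)
  refine cauchy_joint (u := fun z w => f (z, w)) h2 hF ?_ ?_
  · filter_upwards [closedBall_mem_nhds (0:ℂ) h2] with z hz using hd z hz
  · filter_upwards [closedBall_mem_nhds (0:ℂ) h2] with z hz ζ
    exact circ_apply ((hd z hz).continuousOn.mono sphere_subset_closedBall) ζ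

/-- `f` can be handled on the circle of radius `r` -/
structure Good (r : ℝ) (f : ℂ × ℂ → ℂ) : Prop where
  slice : ∀ᶠ z in 𝓝 (0:ℂ), AnalyticOnNhd ℂ (fun w => f (z, w)) (closedBall 0 r)
  an : AnalyticAt ℂ (fun z => circ r (fun w => f (z, w))) 0
  an' : AnalyticAt ℂ (fun z => circ r (deriv (fun w => f (z, w)))) 0

lemma Good.apply {r : ℝ} {f : ℂ × ℂ → ℂ} (h : Good r f) :
    ∀ᶠ z in 𝓝 (0:ℂ), ∀ ζ : sphere (0:ℂ) r, circ r (fun w => f (z, w)) ζ = f (z, ζ) := by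
  filter_upwards [h.slice] with z hz ζ
  exact circ_apply (hz.continuousOn.mono sphere_subset_closedBall) ζ

lemma Good.apply' {r : ℝ} {f : ℂ × ℂ → ℂ} (h : Good r f) :
    ∀ᶠ z in 𝓝 (0:ℂ), ∀ ζ : sphere (0:ℂ) r,
      circ r (deriv (fun w => f (z, w))) ζ = deriv (fun w => f (z, w)) ζ := by
  filter_upwards [h.slice] with z hz ζ
  exact circ_apply (hz.deriv.continuousOn.mono sphere_subset_closedBall) ζ

lemma exists_good {f : ℂ × ℂ → ℂ} (hf : AnalyticAt ℂ f 0) :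
    ∃ ε > 0, ∀ r < ε, Good r f := by
  obtain ⟨ε, hε, hεU⟩ := Metric.mem_nhds_iff.1 hf.eventually_analyticAt
  have h2 : 0 < ε / 2 := by linarith
  refine ⟨ε, hε, fun r hr => ?_⟩
  have hA : ∀ z ∈ closedBall (0:ℂ) (ε/2), ∀ w ∈ closedBall (0:ℂ) r, AnalyticAt ℂ f (z, w) := by
    intro z hz w hw
    apply hεU
    rw [← Prod.mk_zero_zero, ← ball_prod_same]
    exact ⟨closedBall_subset_ball (by linarith) hz, closedBall_subset_ball hr hw⟩
  have hfc : ContinuousOn f (closedBall 0 (ε/2) ×ˢ sphere 0 r) := fun p hp =>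
    (hA p.1 hp.1 p.2 (sphere_subset_closedBall hp.2)).continuousAt.continuousWithinAt
  have hder : ∀ z ∈ closedBall (0:ℂ) (ε/2), ∀ w ∈ closedBall (0:ℂ) r,
      deriv (fun w => f (z, w)) w = fderiv ℂ f (z, w) (0, 1) := by
    intro z hz w hw
    have h1 := (hA z hz w hw).differentiableAt.hasFDerivAt
    have h3 : HasDerivAt (fun w : ℂ => (z, w)) (0, 1) w :=
      (hasDerivAt_const w z).prodMk (hasDerivAt_id w)
    exact (h1.comp_hasDerivAt w h3).deriv
  have hD : ∀ z ∈ closedBall (0:ℂ) (ε/2), ∀ w ∈ closedBall (0:ℂ) r,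
      AnalyticAt ℂ (fun p => fderiv ℂ f p (0, 1)) (z, w) := fun z hz w hw =>
    ((ContinuousLinearMap.apply ℂ ℂ ((0, 1) : ℂ × ℂ)).analyticAt _).fun_comp (hA z hz w hw).fderiv
  constructor
  · filter_upwards [closedBall_mem_nhds (0:ℂ) h2] with z hz w hw
    exact (hA z hz w hw).fun_comp (g := f) (f := fun w => (z, w)) (by fun_prop)
  · refine circ_analytic h2 hfc fun ζ hζ z hz => ?_
    exact ((hA z hz ζ (sphere_subset_closedBall hζ)).fun_comp (g := f) (f := fun z => (z, ζ))
      (by fun_prop)).differentiableAt.differentiableWithinAt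
  · refine circ_analytic h2 ?_ fun ζ hζ => ?_
    · refine ContinuousOn.congr (f := fun p : ℂ × ℂ => fderiv ℂ f p (0, 1)) ?_ ?_
      · exact fun p hp =>
          (hD p.1 hp.1 p.2 (sphere_subset_closedBall hp.2)).continuousAt.continuousWithinAt
      · intro p hp
        exact hder p.1 hp.1 p.2 (sphere_subset_closedBall hp.2)
    · refine DifferentiableOn.congr (f := fun z => fderiv ℂ f (z, ζ) (0, 1)) ?_ ?_
      · intro z hz
        exact ((hD z hz ζ (sphere_subset_closedBall hζ)).fun_comp
          (g := fun p => fderiv ℂ f p (0, 1)) (f := fun z => (z, ζ))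
          (by fun_prop)).differentiableAt.differentiableWithinAt
      · intro z hz
        exact hder z hz ζ (sphere_subset_closedBall hζ)

end PLS

namespace PLS
open Metric Complex Topology

lemma hurwitz {E : Type*} [NormedAddCommGroup E] [NormedSpace ℂ E] {R : ℂ × E → ℂ}
    (hR : AnalyticAt ℂ R 0) (hR0 : R 0 = 0) (hne : ∀ᶠ z in 𝓝[≠] (0:ℂ), R (z, 0) ≠ 0)
    {δ : ℝ} (hδ : 0 < δ) : ∀ᶠ e in 𝓝 (0:E), ∃ z ∈ ball (0:ℂ) δ, R (z, e) = 0 := by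
  obtain ⟨ε, hε, hεU⟩ := Metric.mem_nhds_iff.1 hR.eventually_analyticAt
  rw [eventually_nhdsWithin_iff] at hne
  obtain ⟨ε', hε', hεU'⟩ := Metric.mem_nhds_iff.1 hne
  obtain ⟨ρ, hρ, hρ2⟩ := exists_between (lt_min hε (lt_min hε' hδ))
  simp only [lt_min_iff] at hρ2
  obtain ⟨hρ1, hρ2, hρ3⟩ := hρ2
  have hA : ∀ z ∈ closedBall (0:ℂ) ρ, ∀ e ∈ ball (0:E) ε, AnalyticAt ℂ R (z, e) := by
    intro z hz e he
    apply hεU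
    rw [← Prod.mk_zero_zero, ← ball_prod_same]
    exact ⟨closedBall_subset_ball hρ1 hz, he⟩
  have h0E : (0:E) ∈ ball (0:E) ε := mem_ball_self hε
  have hcont : ContinuousOn (fun z => ‖R (z, 0)‖) (sphere (0:ℂ) ρ) := by
    intro z hz
    have h1 := (hA z (sphere_subset_closedBall hz) 0 h0E).continuousAt
    exact (ContinuousAt.comp (f := fun z => (z, (0:E))) h1 (by fun_prop)).norm.continuousWithinAt
  obtain ⟨z1, hz1, hmin⟩ := (isCompact_sphere (0:ℂ) ρ).exists_isMinOn
    (NormedSpace.sphere_nonempty.2 hρ.le) hcont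
  set c := ‖R (z1, 0)‖ with hc
  have hcpos : 0 < c := by
    rw [hc, norm_pos_iff]
    refine hεU' (sphere_subset_closedBall.trans (closedBall_subset_ball hρ2) hz1) ?_
    rintro rfl
    simp [hρ.ne] at hz1
  have ev1 : ∀ᶠ e in 𝓝 (0:E), ∀ z ∈ sphere (0:ℂ) ρ, c / 2 < ‖R (z, e)‖ := by
    apply (isCompact_sphere (0:ℂ) ρ).eventually_forall_of_forall_eventually
    intro z hz
    have h1 := (hA z (sphere_subset_closedBall hz) 0 h0E).continuousAt
    have h2 : ContinuousAt (fun p : E × ℂ => ‖R (p.2, p.1)‖) (0, z) :=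
      (ContinuousAt.comp (f := fun p : E × ℂ => (p.2, p.1)) (x := ((0:E), z)) h1
        (by fun_prop)).norm
    have h3 : c / 2 < ‖R (z, 0)‖ := lt_of_lt_of_le (by linarith) (isMinOn_iff.1 hmin z hz)
    exact h2.eventually (lt_mem_nhds h3)
  have ev2 : ∀ᶠ e in 𝓝 (0:E), ‖R (0, e)‖ < c / 2 := by
    have h2 : ContinuousAt (fun e : E => ‖R (0, e)‖) 0 :=
      (ContinuousAt.comp (f := fun e : E => ((0:ℂ), e)) (x := (0:E)) hR.continuousAt
        (by fun_prop)).norm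
    have h3 : ‖R (0, (0:E))‖ < c / 2 := by
      rw [Prod.mk_zero_zero, hR0, norm_zero]; linarith
    exact h2.eventually (gt_mem_nhds h3)
  filter_upwards [ev1, ev2, ball_mem_nhds (0:E) hε] with e h1 h2 h3
  by_contra hcon
  push Not at hcon
  have hcb : closedBall (0:ℂ) ρ ⊆ ball 0 δ := closedBall_subset_ball hρ3
  have hd : DiffContOnCl ℂ (fun z => (R (z, e))⁻¹) (ball 0 ρ) := by
    apply DifferentiableOn.diffContOnCl
    rw [closure_ball _ hρ.ne']
    refine DifferentiableOn.fun_inv ?_ (fun z hz => hcon z (hcb hz))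
    intro z hz
    exact ((hA z hz e h3).fun_comp (g := R) (f := fun z => (z, e))
      (by fun_prop)).differentiableAt.differentiableWithinAt
  have := Complex.norm_le_of_forall_mem_frontier_norm_le isBounded_ball hd (C := (c / 2)⁻¹) (by
    intro z hz
    rw [frontier_ball _ hρ.ne'] at hz
    rw [norm_inv]
    exact inv_anti₀ (by linarith) (h1 z hz).le) (subset_closure (mem_ball_self hρ))
  rw [norm_inv] at this
  have hp : 0 < ‖R (0, e)‖ := norm_pos_iff.2 (hcon 0 (mem_ball_self hδ))
  rw [inv_le_inv₀ hp (by linarith)] at this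
  linarith

lemma exists_radius {f : ℂ × ℂ → ℂ} (hf : AnalyticAt ℂ f 0)
    (hreg : ¬ ∀ᶠ w in 𝓝 (0:ℂ), f (0, w) = 0) :
    ∃ ε > 0, ∀ w ∈ ball (0:ℂ) ε, w ≠ 0 → f (0, w) ≠ 0 := by
  have h1 : AnalyticAt ℂ (fun w : ℂ => f (0, w)) 0 :=
    AnalyticAt.fun_comp (g := f) (f := fun w : ℂ => (0, w)) hf (by fun_prop)
  have h2 := h1.eventually_eq_zero_or_eventually_ne_zero.resolve_left hreg
  rw [eventually_nhdsWithin_iff] at h2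
  obtain ⟨ε, hε, h⟩ := Metric.mem_nhds_iff.1 h2
  exact ⟨ε, hε, fun w hw h0 => h hw h0⟩

lemma surj {f g : ℂ × ℂ → ℂ} (hf : AnalyticAt ℂ f 0) (hg : AnalyticAt ℂ g 0) (hf0 : f 0 = 0)
    (hg0 : g 0 = 0) (hreg : ¬ ∀ᶠ w in 𝓝 (0:ℂ), f (0, w) = 0)
    (hiso : ∀ᶠ p in 𝓝 (0 : ℂ × ℂ), f p = 0 → g p = 0 → p = 0) :
    ∀ W ∈ 𝓝 (0 : ℂ × ℂ), (fun p => (f p, g p)) '' W ∈ 𝓝 ((0, 0) : ℂ × ℂ) := by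
  intro W hW
  obtain ⟨ε1, hε1, H1⟩ := exists_good hf
  obtain ⟨ε2, hε2, H2⟩ := exists_good hg
  obtain ⟨ε3, hε3, H3⟩ := exists_radius hf hreg
  obtain ⟨ε4, hε4, H4⟩ := Metric.mem_nhds_iff.1 (Filter.inter_mem hiso hW)
  obtain ⟨r, hr, hr2⟩ := exists_between (lt_min hε1 (lt_min hε2 (lt_min hε3 hε4)))
  simp only [lt_min_iff] at hr2
  obtain ⟨hr1, hr2, hr3, hr4⟩ := hr2
  have Gf := H1 r hr1
  have Gg := H2 r hr2
  have t1 : Tendsto (fun e : ℂ × ℂ × ℂ => e.1) (𝓝 0) (𝓝 0) :=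
    continuous_fst.tendsto (0 : ℂ × ℂ × ℂ)
  have han : ∀ {F : ℂ → C(sphere (0:ℂ) r, ℂ)}, AnalyticAt ℂ F 0 →
      AnalyticAt ℂ (fun e : ℂ × ℂ × ℂ => F e.1) 0 := by
    intro F hF
    have : AnalyticAt ℂ F (0 : ℂ × ℂ × ℂ).1 := hF
    exact this.fun_comp analyticAt_fst
  have pa : AnalyticAt ℂ (fun e : ℂ × ℂ × ℂ => e.2.1) 0 :=
    ((ContinuousLinearMap.fst ℂ ℂ ℂ).comp (ContinuousLinearMap.snd ℂ ℂ (ℂ × ℂ))).analyticAt 0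
  have pb : AnalyticAt ℂ (fun e : ℂ × ℂ × ℂ => e.2.2) 0 :=
    ((ContinuousLinearMap.snd ℂ ℂ ℂ).comp (ContinuousLinearMap.snd ℂ ℂ (ℂ × ℂ))).analyticAt 0
  obtain ⟨m, y, u, hyu, hsum⟩ := count (E := ℂ × ℂ × ℂ) hr
    (h := fun e w => f (e.1, w) - e.2.1)
    (F := fun e => circ r (fun w => f (e.1, w)) - e.2.1 • 1)
    (F' := fun e => circ r (deriv (fun w => f (e.1, w))))
    ((han Gf.an).sub (pa.smul analyticAt_const)) (han Gf.an')
    (by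
      filter_upwards [t1.eventually Gf.slice] with e he w hw
      exact (he w hw).sub analyticAt_const)
    (by
      filter_upwards [t1.eventually Gf.apply] with e he ζ
      simp [he])
    (by
      filter_upwards [t1.eventually Gf.apply'] with e he ζ
      simp [he])
    (by
      intro ζ hζ
      simp only [Prod.fst_zero, Prod.snd_zero, sub_zero]
      refine H3 ζ (sphere_subset_closedBall.trans (closedBall_subset_ball hr3) hζ) ?_
      rintro rfl
      simp [hr.ne] at hζ)
  let R : ℂ × ℂ × ℂ → ℂ := fun e => ∏ i, (g (e.1, y e i) - e.2.2)
  have hR : AnalyticAt ℂ R 0 := by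
    have := newton (y := fun (e : ℂ × ℂ × ℂ) i => g (e.1, y e i) - e.2.2) (e0 := 0) (fun k => by
      refine hsum (fun e => (circ r (fun w => g (e.1, w)) - e.2.2 • 1) ^ k)
        (fun e w => (g (e.1, w) - e.2.2) ^ k) ?_ ?_ ?_
      · exact ((han Gg.an).sub (pb.smul analyticAt_const)).pow k
      · filter_upwards [t1.eventually Gg.slice] with e he
        exact (he.differentiableOn.sub_const _).pow k
      · filter_upwards [t1.eventually Gg.apply] with e he ζ
        simp [he]) m
    convert this using 2 with e
    simp only [R, MvPolynomial.esymm]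
    have hcard : Finset.powersetCard m (Finset.univ : Finset (Fin m)) = {Finset.univ} := by
      have := Finset.powersetCard_self (Finset.univ : Finset (Fin m))
      rwa [Finset.card_univ, Fintype.card_fin] at this
    rw [hcard]
    simp
  have hroot : ∀ᶠ e in 𝓝 (0 : ℂ × ℂ × ℂ), ∀ i, y e i ∈ ball (0:ℂ) r ∧ f (e.1, y e i) = e.2.1 := by
    filter_upwards [hyu] with e he i
    refine ⟨he.2.2.1 i, ?_⟩
    have := (he.2.2.2 _ (ball_subset_closedBall (he.2.2.1 i))).self_of_nhds
    simp only at this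
    rw [Finset.prod_eq_zero (Finset.mem_univ i) (sub_self _), zero_mul, sub_eq_zero] at this
    exact this
  have hR0 : R 0 = 0 := by
    have h1 := hyu.self_of_nhds
    have h2 := (h1.2.2.2 0 (by simp [hr.le])).self_of_nhds
    simp only [Prod.fst_zero, Prod.snd_zero, sub_zero, Prod.mk_zero_zero, hf0] at h2
    have h3 := (mul_eq_zero.1 h2.symm).resolve_right (h1.2.1 0 (by simp [hr.le]))
    obtain ⟨i, _, hi⟩ := Finset.prod_eq_zero_iff.1 h3
    refine Finset.prod_eq_zero (Finset.mem_univ i) ?_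
    have : y 0 i = 0 := by simpa using hi
    simp only [this, Prod.fst_zero, Prod.snd_zero, Prod.mk_zero_zero, hg0, sub_zero]
  have hne : ∀ᶠ z in 𝓝[≠] (0:ℂ), R (z, 0) ≠ 0 := by
    have t2 : Tendsto (fun z : ℂ => ((z, 0) : ℂ × ℂ × ℂ)) (𝓝 0) (𝓝 0) :=
      Continuous.tendsto (f := fun z : ℂ => ((z, 0) : ℂ × ℂ × ℂ)) (by fun_prop) 0
    rw [eventually_nhdsWithin_iff]
    filter_upwards [t2.eventually hroot, ball_mem_nhds (0:ℂ) hε4] with z hz hzb hz0 hzR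
    obtain ⟨i, _, hi⟩ := Finset.prod_eq_zero_iff.1 hzR
    obtain ⟨hy1, hy2⟩ := hz i
    have hm : (z, y (z, 0) i) ∈ ball (0 : ℂ × ℂ) ε4 := by
      rw [← Prod.mk_zero_zero, ← ball_prod_same]
      exact ⟨hzb, ball_subset_ball hr4.le hy1⟩
    have := (H4 hm).1 hy2 (by simpa using hi)
    exact hz0 (congrArg Prod.fst this)
  obtain ⟨δ, hδ, hδ2⟩ := Metric.mem_nhds_iff.1 hroot
  have hδ4 : 0 < min δ ε4 := lt_min hδ hε4
  rw [Prod.mk_zero_zero]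
  filter_upwards [hurwitz hR hR0 hne hδ4, ball_mem_nhds (0 : ℂ × ℂ) hδ] with e he heb
  obtain ⟨z, hz, hzR⟩ := he
  have hm : (z, e) ∈ ball (0 : ℂ × ℂ × ℂ) δ := by
    rw [← Prod.mk_zero_zero, ← ball_prod_same]
    exact ⟨ball_subset_ball (min_le_left _ _) hz, heb⟩
  obtain ⟨i, _, hi⟩ := Finset.prod_eq_zero_iff.1 hzR
  obtain ⟨hy1, hy2⟩ := hδ2 hm i
  refine ⟨(z, y (z, e) i), ?_, ?_⟩
  · refine (H4 ?_).2
    rw [← Prod.mk_zero_zero, ← ball_prod_same]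
    exact ⟨ball_subset_ball (min_le_right _ _) hz, ball_subset_ball hr4.le hy1⟩
  · exact Prod.ext hy2 (sub_eq_zero.1 hi)

end PLS

namespace PLS
open Metric Complex Topology

lemma prep {f : ℂ × ℂ → ℂ} (hf : AnalyticAt ℂ f 0)
    (hreg : ¬ ∀ᶠ w in 𝓝 (0:ℂ), f (0, w) = 0) :
    ∃ (m : ℕ) (c : ℕ → ℂ → ℂ) (u : ℂ × ℂ → ℂ), (∀ k, AnalyticAt ℂ (c k) 0) ∧
      (∀ k < m, c k 0 = 0) ∧ AnalyticAt ℂ u 0 ∧ u 0 ≠ 0 ∧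
      ∀ᶠ p in 𝓝 (0 : ℂ × ℂ), f p = u p * (p.2 ^ m + ∑ k ∈ Finset.range m, c k p.1 * p.2 ^ k) := by
  obtain ⟨ε1, hε1, H1⟩ := exists_good hf
  obtain ⟨ε3, hε3, H3⟩ := exists_radius hf hreg
  obtain ⟨r, hr, hr2⟩ := exists_between (lt_min hε1 hε3)
  simp only [lt_min_iff] at hr2
  obtain ⟨hr1, hr3⟩ := hr2
  have Gf := H1 r hr1
  obtain ⟨m, y, u, hyu, hsum⟩ := count (E := ℂ) hr (h := fun z w => f (z, w)) Gf.an Gf.an'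
    Gf.slice Gf.apply Gf.apply' (by
      intro ζ hζ
      refine H3 ζ (sphere_subset_closedBall.trans (closedBall_subset_ball hr3) hζ) ?_
      rintro rfl
      simp [hr.ne] at hζ)
  have hid : ∀ ζ : sphere (0:ℂ) r, circ r id ζ = ζ := fun ζ =>
    circ_apply continuous_id.continuousOn ζ
  have hes := newton (y := y) (e0 := 0) (fun k => by
    refine hsum (fun e => (circ r id) ^ k) (fun e w => w ^ k) analyticAt_const ?_ ?_
    · exact Eventually.of_forall fun e => by fun_prop
    · exact Eventually.of_forall fun e ζ => by simp [hid])
  let p : ℂ → Polynomial ℂ := fun z => ∏ i, (Polynomial.X - Polynomial.C (y z i))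
  have hpdeg : ∀ z, (p z).natDegree = m := by
    intro z
    simp [p, Polynomial.natDegree_finsetProd_X_sub_C_eq_card]
  have hpm : ∀ z, (p z).Monic := fun z => Polynomial.monic_prod_X_sub_C _ _
  have hpe : ∀ z w, ∏ i, (w - y z i) = w ^ m + ∑ k ∈ Finset.range m, (p z).coeff k * w ^ k := by
    intro z w
    have h1 : (p z).eval w = ∏ i, (w - y z i) := by simp [p, Polynomial.eval_prod]
    have h2 : (p z).coeff m = 1 := by
      have := hpm z
      rwa [Polynomial.Monic, Polynomial.leadingCoeff, hpdeg] at this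
    rw [← h1, Polynomial.eval_eq_sum_range, hpdeg, Finset.sum_range_succ, h2]
    ring
  have hpa : ∀ k, AnalyticAt ℂ (fun z => (p z).coeff k) 0 := by
    intro k
    by_cases hk : k ≤ m
    · have e : (fun z => (p z).coeff k) = fun z =>
          (-1) ^ (m - k) * MvPolynomial.aeval (y z) (MvPolynomial.esymm (Fin m) ℂ (m - k)) := by
        ext z
        have h1 := Multiset.prod_X_sub_C_coeff (Finset.univ.val.map (y z)) (k := k) (by simpa using hk)
        rw [Multiset.map_map] at h1
        rw [MvPolynomial.aeval_esymm_eq_multiset_esymm]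
        simp only [Multiset.card_map, Finset.card_val, Finset.card_univ, Fintype.card_fin] at h1
        exact h1
      rw [e]
      exact analyticAt_const.mul (hes _)
    · have e : (fun z => (p z).coeff k) = fun z => 0 := by
        ext z
        apply Polynomial.coeff_eq_zero_of_natDegree_lt
        rw [hpdeg]; omega
      rw [e]
      exact analyticAt_const
  have hy0 : ∀ i, y 0 i = 0 := by
    intro i
    have h1 := hyu.self_of_nhds
    have h2 := (h1.2.2.2 _ (ball_subset_closedBall (h1.2.2.1 i))).self_of_nhds
    simp only at h2
    rw [Finset.prod_eq_zero (Finset.mem_univ i) (sub_self _), zero_mul] at h2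
    by_contra hne
    exact H3 _ (ball_subset_ball hr3.le (h1.2.2.1 i)) hne h2
  let Q : ℂ → C(sphere (0:ℂ) r, ℂ) := fun z =>
    (circ r id) ^ m + ∑ k ∈ Finset.range m, (p z).coeff k • (circ r id) ^ k
  have hQa : AnalyticAt ℂ Q 0 := by
    refine analyticAt_const.add ?_
    refine Finset.analyticAt_fun_sum _ fun k _ => ?_
    exact (hpa k).smul analyticAt_const
  have hQ : ∀ z ζ, Q z ζ = ∏ i, ((ζ : ℂ) - y z i) := by
    intro z ζ
    simp [Q, hpe, hid, ContinuousMap.sum_apply]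
  have hQ0 : IsUnit (Q 0) := by
    rw [ContinuousMap.isUnit_iff_forall_ne_zero]
    intro ζ
    rw [hQ]
    refine Finset.prod_ne_zero_iff.2 fun i _ => ?_
    rw [hy0, sub_zero]
    intro h
    have h2 := ζ.2
    rw [h] at h2
    simp [hr.ne] at h2
  have hua : AnalyticAt ℂ (fun q : ℂ × ℂ => u q.1 q.2) 0 := by
    refine cauchy_joint hr (Gf.an.mul (analyticAt_ringInverse hQa hQ0)) ?_ ?_
    · filter_upwards [hyu] with z hz using hz.1.differentiableOn
    · filter_upwards [hyu, eventually_isUnit hQa hQ0, Gf.apply] with z h1 h2 h3 ζ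
      have h4 := (h1.2.2.2 ζ (sphere_subset_closedBall ζ.2)).self_of_nhds
      have h5 := (ContinuousMap.isUnit_iff_forall_ne_zero _).1 h2 ζ
      simp only at h4
      rw [hQ] at h5
      simp only [ContinuousMap.mul_apply, Pi.mul_apply, inverse_apply h2, hQ, h3, h4]
      field_simp
  refine ⟨m, fun k z => (p z).coeff k, fun q => u q.1 q.2, hpa, ?_, hua, ?_, ?_⟩
  · intro k hk
    simp only [p, hy0]
    simp [Polynomial.coeff_X_pow, hk.ne]
  · exact hyu.self_of_nhds.2.1 0 (by simp [hr.le])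
  · have hfst : Tendsto (fun p : ℂ × ℂ => p.1) (𝓝 0) (𝓝 0) := continuous_fst.tendsto (0 : ℂ × ℂ)
    have hsnd : Tendsto (fun p : ℂ × ℂ => p.2) (𝓝 0) (𝓝 0) := continuous_snd.tendsto (0 : ℂ × ℂ)
    filter_upwards [hfst.eventually hyu, hsnd.eventually (closedBall_mem_nhds 0 hr)] with q h1 h2
    have h4 := (h1.2.2.2 q.2 h2).self_of_nhds
    simp only at h4
    rw [← hpe, mul_comm, ← h4]

/-- ring of germs of analytic functions in one variable -/
def A : Subring (Germ (𝓝 (0:ℂ)) ℂ) where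
  carrier := {φ | ∃ h : ℂ → ℂ, AnalyticAt ℂ h 0 ∧ φ = (h : Germ (𝓝 (0:ℂ)) ℂ)}
  mul_mem' := by
    rintro _ _ ⟨h, hh, rfl⟩ ⟨k, hk, rfl⟩
    exact ⟨h * k, hh.mul hk, rfl⟩
  one_mem' := ⟨1, analyticAt_const, rfl⟩
  add_mem' := by
    rintro _ _ ⟨h, hh, rfl⟩ ⟨k, hk, rfl⟩
    exact ⟨h + k, hh.add hk, rfl⟩
  zero_mem' := ⟨0, analyticAt_const, rfl⟩
  neg_mem' := by
    rintro _ ⟨h, hh, rfl⟩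
    exact ⟨-h, hh.neg, rfl⟩

/-- the germ of an analytic function -/
noncomputable def mkA (h : ℂ → ℂ) (hh : AnalyticAt ℂ h 0) : A := ⟨(h : Germ (𝓝 (0:ℂ)) ℂ), h, hh, rfl⟩

lemma exists_mkA (a : A) : ∃ h hh, a = mkA h hh := by
  obtain ⟨_, h, hh, rfl⟩ := a
  exact ⟨h, hh, rfl⟩

lemma mkA_eq_iff {h k : ℂ → ℂ} {hh hk} : mkA h hh = mkA k hk ↔ h =ᶠ[𝓝 0] k :=
  Subtype.ext_iff.trans Germ.coe_eq

lemma mkA_mul {h k : ℂ → ℂ} {hh hk} : mkA h hh * mkA k hk = mkA (h * k) (hh.mul hk) := rfl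

lemma mkA_eq_zero {h : ℂ → ℂ} {hh} : mkA h hh = 0 ↔ ∀ᶠ z in 𝓝 0, h z = 0 :=
  mkA_eq_iff (k := 0) (hk := analyticAt_const)

instance : Nontrivial A := ⟨1, 0, by
  intro h
  have : ∀ᶠ z in 𝓝 (0:ℂ), (1 : ℂ → ℂ) z = 0 := mkA_eq_zero (hh := analyticAt_const).1 h
  simpa using this.self_of_nhds⟩

lemma mkA_ne_zero {h : ℂ → ℂ} {hh} (h0 : mkA h hh ≠ 0) : ∀ᶠ z in 𝓝[≠] 0, h z ≠ 0 := by
  rw [Ne, mkA_eq_zero] at h0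
  exact hh.eventually_eq_zero_or_eventually_ne_zero.resolve_left h0

instance : NoZeroDivisors A where
  eq_zero_or_eq_zero_of_mul_eq_zero := by
    intro a b hab
    obtain ⟨h, hh, rfl⟩ := exists_mkA a
    obtain ⟨k, hk, rfl⟩ := exists_mkA b
    by_contra hc
    push Not at hc
    rw [mkA_mul, mkA_eq_zero] at hab
    obtain ⟨z, h1, h2, h3⟩ := ((mkA_ne_zero hc.1).and ((mkA_ne_zero hc.2).and
      (hab.filter_mono nhdsWithin_le_nhds))).exists
    simp only [Pi.mul_apply, mul_eq_zero] at h3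
    tauto

instance : IsDomain A := NoZeroDivisors.to_isDomain A

lemma A_factor {a : A} (ha : a ≠ 0) : ∃ (n : ℕ) (v : Aˣ), a = (mkA id analyticAt_id) ^ n * v := by
  obtain ⟨h, hh, rfl⟩ := exists_mkA a
  rw [Ne, mkA_eq_zero] at ha
  obtain ⟨n, k, hk, hk0, hE⟩ := hh.exists_eventuallyEq_pow_smul_nonzero_iff.2 ha
  have hkinv : AnalyticAt ℂ k⁻¹ 0 := hk.inv hk0
  refine ⟨n, ⟨mkA k hk, mkA k⁻¹ hkinv, ?_, ?_⟩, ?_⟩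
  · refine (mkA_eq_iff (h := k * k⁻¹) (hh := hk.mul hkinv) (k := 1) (hk := analyticAt_const)).2 ?_
    filter_upwards [hk.continuousAt.eventually_ne hk0] with z hz
    simp [hz]
  · refine (mkA_eq_iff (h := k⁻¹ * k) (hh := hkinv.mul hk) (k := 1) (hk := analyticAt_const)).2 ?_
    filter_upwards [hk.continuousAt.eventually_ne hk0] with z hz
    simp [hz]
  · have : mkA (id ^ n * k) ((analyticAt_id.pow n).mul hk) = (mkA id analyticAt_id) ^ n * mkA k hk :=
      rfl
    simp only
    rw [← this, mkA_eq_iff]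
    filter_upwards [hE] with z hz
    simpa using hz

instance : ValuationRing A where
  cond' := by
    intro a b
    by_cases ha : a = 0
    · exact ⟨0, Or.inr (by simp [ha])⟩
    by_cases hb : b = 0
    · exact ⟨0, Or.inl (by simp [hb])⟩
    obtain ⟨n, v, hv⟩ := A_factor ha
    obtain ⟨k, w, hw⟩ := A_factor hb
    set Z := mkA id analyticAt_id
    rcases le_total n k with h | h
    · refine ⟨Z ^ (k - n) * (↑v⁻¹ * w), Or.inl ?_⟩
      obtain ⟨j, rfl⟩ := Nat.exists_eq_add_of_le h
      rw [hv, hw, Nat.add_sub_cancel_left, pow_add]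
      calc _ = Z ^ n * Z ^ j * (v * ↑v⁻¹) * w := by ring
        _ = _ := by rw [Units.mul_inv, mul_one]
    · refine ⟨Z ^ (n - k) * (↑w⁻¹ * v), Or.inr ?_⟩
      obtain ⟨j, rfl⟩ := Nat.exists_eq_add_of_le h
      rw [hv, hw, Nat.add_sub_cancel_left, pow_add]
      calc _ = Z ^ k * Z ^ j * (w * ↑w⁻¹) * v := by ring
        _ = _ := by rw [Units.mul_inv, mul_one]


end PLS

namespace PLS
open Metric Complex Topology
open Polynomial in
lemma alg {R : Type*} [CommRing R] [IsDomain R] [IsIntegrallyClosed R] {P Q : R[X]}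
    (hP : P.Monic) (hQ : Q.Monic) :
    (∃ (a b : R[X]) (s : R), s ≠ 0 ∧ a * P + b * Q = C s) ∨
      ∃ D : R[X], D.Monic ∧ 0 < D.natDegree ∧ D ∣ P ∧ D ∣ Q := by
  classical
  let K := FractionRing R
  have hinj : Function.Injective (algebraMap R K) := IsFractionRing.injective R K
  by_cases hc : IsCoprime (P.map (algebraMap R K)) (Q.map (algebraMap R K))
  · left
    obtain ⟨a, b, hab⟩ := hc
    obtain ⟨s, hs, ha⟩ := IsLocalization.integerNormalization_spec (nonZeroDivisors R) a
    obtain ⟨t, ht, hb⟩ := IsLocalization.integerNormalization_spec (nonZeroDivisors R) b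
    set a' := IsLocalization.integerNormalization (nonZeroDivisors R) a
    set b' := IsLocalization.integerNormalization (nonZeroDivisors R) b
    refine ⟨C t * a', C s * b', s * t, mul_ne_zero (nonZeroDivisors.ne_zero hs)
      (nonZeroDivisors.ne_zero ht), ?_⟩
    apply Polynomial.map_injective _ hinj
    simp only [Polynomial.map_add, Polynomial.map_mul, Polynomial.map_C, ha, hb, map_mul]
    have e1 : s • a = C (algebraMap R K s) * a := by
      rw [← Polynomial.smul_eq_C_mul, algebraMap_smul]
    have e2 : t • b = C (algebraMap R K t) * b := by
      rw [← Polynomial.smul_eq_C_mul, algebraMap_smul]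
    rw [e1, e2]
    linear_combination (C (algebraMap R K s) * C (algebraMap R K t)) * hab
  · right
    rw [← EuclideanDomain.gcd_isUnit_iff] at hc
    set D := EuclideanDomain.gcd (P.map (algebraMap R K)) (Q.map (algebraMap R K)) with hD
    have h1 : D ∣ P.map (algebraMap R K) := EuclideanDomain.gcd_dvd_left _ _
    have h2 : D ∣ Q.map (algebraMap R K) := EuclideanDomain.gcd_dvd_right _ _
    have hD0 : D ≠ 0 := ne_zero_of_dvd_ne_zero (hP.map _).ne_zero h1
    obtain ⟨D', hD'⟩ := IsIntegrallyClosed.eq_map_mul_C_of_dvd K hP h1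
    have hl : D.leadingCoeff ≠ 0 := by simpa using hD0
    have hlead : (D'.map (algebraMap R K)).Monic := by
      have := congrArg leadingCoeff hD'
      rw [leadingCoeff_mul, leadingCoeff_C] at this
      exact mul_right_cancel₀ hl (by rw [this, one_mul])
    have hmon : D'.Monic := Polynomial.monic_of_injective hinj hlead
    have hdvd : D'.map (algebraMap R K) ∣ D := ⟨_, hD'.symm⟩
    refine ⟨D', hmon, ?_, (Polynomial.map_dvd_map _ hinj hmon).1 (hdvd.trans h1),
      (Polynomial.map_dvd_map _ hinj hmon).1 (hdvd.trans h2)⟩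
    by_contra h0
    have h1' : D' = 1 := hmon.natDegree_eq_zero.1 (by omega)
    apply hc
    rw [← hD', h1', Polynomial.map_one, one_mul]
    exact Polynomial.isUnit_C.2 (isUnit_iff_ne_zero.2 hl)

/-- pull back along the first projection -/
noncomputable def iota : A →+* Germ (𝓝 (0 : ℂ × ℂ)) ℂ where
  toFun a := (a : Germ (𝓝 (0:ℂ)) ℂ).compTendsto Prod.fst
    (continuous_fst.tendsto' (0 : ℂ × ℂ) 0 rfl)
  map_one' := rfl
  map_zero' := rfl
  map_mul' := by
    rintro ⟨_, h, hh, rfl⟩ ⟨_, k, hk, rfl⟩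
    rfl
  map_add' := by
    rintro ⟨_, h, hh, rfl⟩ ⟨_, k, hk, rfl⟩
    rfl

lemma iota_mkA {h : ℂ → ℂ} {hh} :
    iota (mkA h hh) = ((fun p : ℂ × ℂ => h p.1 : ℂ × ℂ → ℂ) : Germ (𝓝 (0 : ℂ × ℂ)) ℂ) := rfl

/-- evaluate a polynomial at the second coordinate -/
noncomputable def ev : Polynomial A →+* Germ (𝓝 (0 : ℂ × ℂ)) ℂ :=
  Polynomial.eval₂RingHom iota ((Prod.snd : ℂ × ℂ → ℂ) : Germ (𝓝 (0 : ℂ × ℂ)) ℂ)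

/-- value at zero -/
noncomputable def ev0 : A →+* ℂ := Germ.valueRingHom.comp A.subtype

lemma ev_rep (p : Polynomial A) : ∃ d : ℂ × ℂ → ℂ, AnalyticAt ℂ d 0 ∧
    ev p = (d : Germ (𝓝 (0 : ℂ × ℂ)) ℂ) := by
  induction p using Polynomial.induction_on' with
  | add p q hp hq =>
    obtain ⟨d, hd, h1⟩ := hp
    obtain ⟨e, he, h2⟩ := hq
    exact ⟨d + e, hd.add he, by rw [map_add, h1, h2]; rfl⟩
  | monomial n a =>
    obtain ⟨h, hh, rfl⟩ := exists_mkA a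
    refine ⟨(fun p => h p.1) * Prod.snd ^ n, ?_, ?_⟩
    · exact (AnalyticAt.fun_comp (f := fun p : ℂ × ℂ => p.1) (x := (0 : ℂ × ℂ)) hh
        analyticAt_fst).mul (analyticAt_snd.pow n)
    · rw [ev, Polynomial.coe_eval₂RingHom, Polynomial.eval₂_monomial, iota_mkA]
      rfl

lemma ev_value (p : Polynomial A) : Germ.valueRingHom (ev p) = (p.map ev0).eval 0 := by
  have : (Germ.valueRingHom.comp ev : Polynomial A →+* ℂ) =
      (Polynomial.evalRingHom 0).comp (Polynomial.mapRingHom ev0) := by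
    apply Polynomial.ringHom_ext
    · intro a
      obtain ⟨h, hh, rfl⟩ := exists_mkA a
      simp only [RingHom.comp_apply, ev, Polynomial.coe_eval₂RingHom, Polynomial.eval₂_C,
        Polynomial.coe_mapRingHom, Polynomial.map_C, Polynomial.coe_evalRingHom, Polynomial.eval_C]
      rfl
    · simp only [RingHom.comp_apply, ev, Polynomial.coe_eval₂RingHom, Polynomial.eval₂_X,
        Polynomial.coe_mapRingHom, Polynomial.map_X, Polynomial.coe_evalRingHom, Polynomial.eval_X]
      rfl
  exact DFunLike.congr_fun this p

open Polynomial in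
lemma prepA {f : ℂ × ℂ → ℂ} (hf : AnalyticAt ℂ f 0)
    (hreg : ¬ ∀ᶠ w in 𝓝 (0:ℂ), f (0, w) = 0) :
    ∃ (P : A[X]) (m : ℕ) (u : ℂ × ℂ → ℂ), P.Monic ∧ P.map ev0 = X ^ m ∧ AnalyticAt ℂ u 0 ∧
      u 0 ≠ 0 ∧ (f : Germ (𝓝 (0 : ℂ × ℂ)) ℂ) = (u : Germ (𝓝 (0 : ℂ × ℂ)) ℂ) * ev P := by
  obtain ⟨m, c, u, hc, hc0, hu, hu0, hE⟩ := prep hf hreg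
  refine ⟨X ^ m + ∑ k ∈ Finset.range m, C (mkA (c k) (hc k)) * X ^ k, m, u, ?_, ?_, hu, hu0, ?_⟩
  · apply monic_X_pow_add
    refine (degree_sum_le _ _).trans_lt ?_
    rw [Finset.sup_lt_iff (by exact WithBot.bot_lt_coe m)]
    intro k hk
    exact (degree_C_mul_X_pow_le k _).trans_lt (by exact_mod_cast Finset.mem_range.1 hk)
  · rw [Polynomial.map_add, Polynomial.map_pow, map_X, Polynomial.map_sum]
    rw [Finset.sum_eq_zero, add_zero]
    intro k hk
    have : ev0 (mkA (c k) (hc k)) = 0 := hc0 k (Finset.mem_range.1 hk)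
    rw [Polynomial.map_mul, map_C, this, C_0, zero_mul]
  · have h1 : ev (X ^ m + ∑ k ∈ Finset.range m, C (mkA (c k) (hc k)) * X ^ k) =
        ((Prod.snd ^ m + ∑ k ∈ Finset.range m, (fun p : ℂ × ℂ => c k p.1) * Prod.snd ^ k :
          ℂ × ℂ → ℂ) : Germ (𝓝 (0 : ℂ × ℂ)) ℂ) := by
      have h2 : ∀ φ : ℕ → ℂ × ℂ → ℂ, ((∑ k ∈ Finset.range m, φ k : ℂ × ℂ → ℂ) :
          Germ (𝓝 (0 : ℂ × ℂ)) ℂ) = ∑ k ∈ Finset.range m, (φ k : Germ (𝓝 (0 : ℂ × ℂ)) ℂ) :=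
        fun φ => map_sum (Germ.coeRingHom (𝓝 (0 : ℂ × ℂ))) φ _
      rw [Germ.coe_add, h2, map_add, map_sum]
      simp only [map_mul, map_pow, ev, coe_eval₂RingHom, eval₂_X, eval₂_C, iota_mkA]
      rfl
    rw [h1, ← Germ.coe_mul, Germ.coe_eq]
    filter_upwards [hE] with p hp
    rw [hp]
    simp

open Polynomial in
theorem isolated {f g : ℂ × ℂ → ℂ} (hf : AnalyticAt ℂ f 0) (hg : AnalyticAt ℂ g 0)
    (hfreg : ¬ ∀ᶠ w in 𝓝 (0:ℂ), f (0, w) = 0) (hgreg : ¬ ∀ᶠ w in 𝓝 (0:ℂ), g (0, w) = 0)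
    (hno : ∀ (d q r : ℂ × ℂ → ℂ),
      AnalyticAt ℂ d 0 → AnalyticAt ℂ q 0 → AnalyticAt ℂ r 0 →
      (f =ᶠ[𝓝 0] fun z => d z * q z) → (g =ᶠ[𝓝 0] fun z => d z * r z) → d 0 ≠ 0) :
    ∀ᶠ p in 𝓝 (0 : ℂ × ℂ), f p = 0 → g p = 0 → p = 0 := by
  obtain ⟨P, m, u, hP, hPm, hu, hu0, hfE⟩ := prepA hf hfreg
  obtain ⟨Q, n, v, hQ, hQm, hv, hv0, hgE⟩ := prepA hg hgreg
  rcases alg hP hQ with ⟨a, b, s, hs, hab⟩ | ⟨D, hD, hdeg, ⟨a, ha⟩, ⟨b, hb⟩⟩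
  · obtain ⟨s, hsa, rfl⟩ := exists_mkA s
    obtain ⟨a', -, ha'⟩ := ev_rep a
    obtain ⟨b', -, hb'⟩ := ev_rep b
    obtain ⟨P', -, hP'⟩ := ev_rep P
    obtain ⟨Q', -, hQ'⟩ := ev_rep Q
    rw [hP', ← Germ.coe_mul, Germ.coe_eq] at hfE
    rw [hQ', ← Germ.coe_mul, Germ.coe_eq] at hgE
    have h1 := congrArg ev hab
    rw [map_add, map_mul, map_mul, ha', hb', hP', hQ', ev, coe_eval₂RingHom, eval₂_C, iota_mkA,
      ← Germ.coe_mul, ← Germ.coe_mul, ← Germ.coe_add, Germ.coe_eq] at h1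
    have h2 := mkA_ne_zero hs
    rw [eventually_nhdsWithin_iff] at h2
    have h3 := (continuous_fst.tendsto' (0 : ℂ × ℂ) (0:ℂ) rfl).eventually h2
    obtain ⟨ε, hε, hrad⟩ := exists_radius hf hfreg
    have h4 : ∀ᶠ p in 𝓝 (0 : ℂ × ℂ), p.2 ∈ ball (0:ℂ) ε :=
      (continuous_snd.tendsto' (0 : ℂ × ℂ) (0:ℂ) rfl).eventually (ball_mem_nhds 0 hε)
    filter_upwards [hfE, hgE, h1, h3, h4, hu.continuousAt.eventually_ne hu0,
      hv.continuousAt.eventually_ne hv0] with p e1 e2 e3 e4 e5 e6 e7 hfp hgp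
    rw [hfp] at e1
    rw [hgp] at e2
    have k1 : P' p = 0 := by simpa [e6] using e1.symm
    have k2 : Q' p = 0 := by simpa [e7] using e2.symm
    simp only [Pi.add_apply, Pi.mul_apply, k1, k2, mul_zero, add_zero] at e3
    have k3 : p.1 = 0 := by
      by_contra hc
      exact e4 hc e3.symm
    obtain ⟨x, y⟩ := p
    simp only at k3
    subst k3
    by_contra hc
    refine hrad y e5 ?_ hfp
    rintro rfl
    exact hc rfl
  · exfalso
    obtain ⟨d, hd, hd'⟩ := ev_rep D
    obtain ⟨a', haa, ha'⟩ := ev_rep a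
    obtain ⟨b', hba, hb'⟩ := ev_rep b
    rw [ha, map_mul, hd', ha', ← Germ.coe_mul, ← Germ.coe_mul, Germ.coe_eq] at hfE
    rw [hb, map_mul, hd', hb', ← Germ.coe_mul, ← Germ.coe_mul, Germ.coe_eq] at hgE
    refine hno d (u * a') (v * b') hd (hu.mul haa) (hv.mul hba) ?_ ?_ ?_
    · filter_upwards [hfE] with p hp
      rw [hp]; simp only [Pi.mul_apply]; ring
    · filter_upwards [hgE] with p hp
      rw [hp]; simp only [Pi.mul_apply]; ring
    · have h1 := ev_value D
      rw [hd'] at h1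
      have h2 : D.map ev0 ∣ X ^ m := by
        rw [← hPm, ha, Polynomial.map_mul]
        exact dvd_mul_right _ _
      obtain ⟨i, -, hi⟩ := (dvd_prime_pow prime_X m).1 h2
      have h3 : D.map ev0 = X ^ i :=
        eq_of_monic_of_associated (hD.map _) (monic_X_pow i) hi
      have h4 : i = D.natDegree := by
        rw [← hD.natDegree_map ev0, h3, natDegree_X_pow]
      rw [h3] at h1
      have h5 : d 0 = eval 0 (X ^ i : ℂ[X]) := h1
      rw [h5, eval_pow, eval_X, zero_pow (by omega)]

theorem core {f g : ℂ × ℂ → ℂ} (hf : AnalyticAt ℂ f 0) (hg : AnalyticAt ℂ g 0)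
    (hf0 : f 0 = 0) (hg0 : g 0 = 0)
    (hfreg : ¬ ∀ᶠ w in 𝓝 (0:ℂ), f (0, w) = 0) (hgreg : ¬ ∀ᶠ w in 𝓝 (0:ℂ), g (0, w) = 0)
    (hno : ∀ (d q r : ℂ × ℂ → ℂ),
      AnalyticAt ℂ d 0 → AnalyticAt ℂ q 0 → AnalyticAt ℂ r 0 →
      (f =ᶠ[𝓝 0] fun z => d z * q z) → (g =ᶠ[𝓝 0] fun z => d z * r z) → d 0 ≠ 0) :
    ∀ W ∈ 𝓝 (0 : ℂ × ℂ), (fun p => (f p, g p)) '' W ∈ 𝓝 ((0, 0) : ℂ × ℂ) :=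
  surj hf hg hf0 hg0 hfreg (isolated hf hg hfreg hgreg hno)

end PLS

namespace PLS
open Metric Complex Topology

/-- the plane -/
abbrev E2 := EuclideanSpace ℂ (Fin 2)

lemma exists_ball_analytic {f : E2 → ℂ} {U : Set E2} (hU : U ∈ 𝓝 (0 : E2))
    (hf : DifferentiableOn ℂ f U) (L : (ℂ × ℂ) ≃L[ℂ] E2) :
    ∃ δ > 0, AnalyticOnNhd ℂ f (ball (0 : E2) δ) := by
  obtain ⟨δ, hδ, hsub⟩ := Metric.mem_nhds_iff.1 hU
  refine ⟨δ, hδ, fun z hz => ?_⟩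
  have hcont : Continuous fun p : ℂ × ℂ => L p + z := by fun_prop
  have hV : (fun p : ℂ × ℂ => L p + z) ⁻¹' ball (0 : E2) δ ∈ 𝓝 (0 : ℂ × ℂ) := by
    apply (isOpen_ball.preimage hcont).mem_nhds
    simpa using hz
  have h1 : AnalyticAt ℂ (fun p => f (L p + z)) 0 := by
    refine osgood hV ?_
    refine (hf.mono hsub).comp (t := ball (0 : E2) δ) ?_ (fun p hp => hp)
    exact (L.differentiable.add_const z).differentiableOn
  have h2 : AnalyticAt ℂ (fun y : E2 => L.symm (y - z)) z :=
    ((L.symm : E2 →L[ℂ] ℂ × ℂ).analyticAt _).fun_comp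
      (f := fun y : E2 => y - z) (analyticAt_id.sub analyticAt_const)
  have h3 : AnalyticAt ℂ (fun p => f (L p + z)) (L.symm (z - z)) := by simpa using h1
  have h4 := AnalyticAt.fun_comp (f := fun y : E2 => L.symm (y - z)) h3 h2
  simpa using h4

/-- nonvanishing along a line -/
lemma line {f : E2 → ℂ} {δ : ℝ} (hf : AnalyticOnNhd ℂ f (ball (0 : E2) δ)) {v : E2}
    (hv : v ∈ ball (0 : E2) δ) (hfv : f v ≠ 0) : ¬ ∀ᶠ w in 𝓝 (0:ℂ), f (w • v) = 0 := by
  intro h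
  set S : Set ℂ := (fun w : ℂ => w • v) ⁻¹' ball (0 : E2) δ with hS
  have hδ : 0 < δ := pos_of_mem_ball hv
  have hconv : Convex ℝ S := by
    intro x hx y hy a b ha hb hab
    have := (convex_ball (0 : E2) δ) hx hy ha hb hab
    simp only [hS, Set.mem_preimage] at *
    convert this using 1
    simp only [add_smul, smul_assoc]
  have han : AnalyticOnNhd ℂ (fun w : ℂ => f (w • v)) S := by
    intro w hw
    exact (hf _ hw).fun_comp (f := fun w : ℂ => w • v) (analyticAt_id.smul analyticAt_const)
  have h0 : (0:ℂ) ∈ S := by simpa [hS] using hδ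
  have h1 : (1:ℂ) ∈ S := by simpa [hS] using hv
  have := han.eqOn_zero_of_preconnected_of_eventuallyEq_zero hconv.isPreconnected h0 h h1
  simp at this
  exact hfv this

theorem main
    (f g : E2 → ℂ)
    (U : Set E2) (hU : U ∈ 𝓝 (0 : E2))
    (hfa : DifferentiableOn ℂ f U) (hga : DifferentiableOn ℂ g U)
    (hf0 : f 0 = 0) (hg0 : g 0 = 0)
    (hfnc : ¬ ∀ᶠ z in 𝓝 (0 : E2), f z = 0)
    (hgnc : ¬ ∀ᶠ z in 𝓝 (0 : E2), g z = 0)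
    (hnocommon : ∀ (d q r : E2 → ℂ),
      AnalyticAt ℂ d 0 → AnalyticAt ℂ q 0 → AnalyticAt ℂ r 0 →
      (f =ᶠ[𝓝 0] fun z => d z * q z) → (g =ᶠ[𝓝 0] fun z => d z * r z) → d 0 ≠ 0) :
    ∀ W ∈ 𝓝 (0 : E2), (fun z => (f z, g z)) '' W ∈ 𝓝 ((0, 0) : ℂ × ℂ) := by
  have L0 : (ℂ × ℂ) ≃L[ℂ] E2 := ContinuousLinearEquiv.ofFinrankEq (by simp)
  obtain ⟨δ₁, hδ₁, hf₁⟩ := exists_ball_analytic hU hfa L0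
  obtain ⟨δ₂, hδ₂, hg₁⟩ := exists_ball_analytic hU hga L0
  set δ := min δ₁ δ₂ with hδdef
  have hδ : 0 < δ := lt_min hδ₁ hδ₂
  have hfA : AnalyticOnNhd ℂ f (ball (0 : E2) δ) :=
    hf₁.mono (ball_subset_ball (min_le_left _ _))
  have hgA : AnalyticOnNhd ℂ g (ball (0 : E2) δ) :=
    hg₁.mono (ball_subset_ball (min_le_right _ _))
  have h0 : (0 : E2) ∈ ball (0 : E2) δ := mem_ball_self hδ
  -- a direction along which neither function vanishes
  obtain ⟨v, hv, hfv, hgv⟩ : ∃ v ∈ ball (0 : E2) δ, f v ≠ 0 ∧ g v ≠ 0 := by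
    by_contra hc
    push Not at hc
    obtain ⟨x, hx, hfx⟩ : ∃ x ∈ ball (0 : E2) δ, f x ≠ 0 := by
      by_contra h
      push Not at h
      exact hfnc (by filter_upwards [ball_mem_nhds 0 hδ] with z hz using h z hz)
    have hne : ∀ᶠ z in 𝓝 x, g z = 0 := by
      filter_upwards [(hfA x hx).continuousAt.eventually_ne hfx, isOpen_ball.mem_nhds hx]
        with z h1 h2 using hc z h2 h1
    have := hgA.eqOn_zero_of_preconnected_of_eventuallyEq_zero
      (convex_ball (0 : E2) δ).isPreconnected hx hne
    exact hgnc (by filter_upwards [ball_mem_nhds 0 hδ] with z hz using this hz)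
  have hv0 : v ≠ 0 := by
    rintro rfl
    exact hfv hf0
  obtain ⟨T, hT⟩ := SeparatingDual.exists_continuousLinearEquiv_apply_eq (R := ℂ)
    (x := L0 (0, 1)) (y := v) (by simp) hv0
  set L : (ℂ × ℂ) ≃L[ℂ] E2 := L0.trans T with hL
  have hLv : ∀ w : ℂ, L (0, w) = w • v := by
    intro w
    have : ((0, w) : ℂ × ℂ) = w • ((0, 1) : ℂ × ℂ) := by simp
    rw [this, map_smul, hL, ContinuousLinearEquiv.trans_apply, hT]
  have hLa : ∀ x, AnalyticAt ℂ (fun p => L p) x := fun x =>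
    (L : (ℂ × ℂ) →L[ℂ] E2).analyticAt x
  have hLs : ∀ x, AnalyticAt ℂ (fun p => L.symm p) x := fun x =>
    (L.symm : E2 →L[ℂ] (ℂ × ℂ)).analyticAt x
  have hL0 : L 0 = 0 := map_zero L
  have hLs0 : L.symm 0 = 0 := map_zero L.symm
  have htl : Tendsto L.symm (𝓝 0) (𝓝 0) := L.symm.continuous.tendsto' 0 0 hLs0
  have htL : Tendsto L (𝓝 0) (𝓝 0) := L.continuous.tendsto' 0 0 hL0
  have key := core (f := fun p => f (L p)) (g := fun p => g (L p))
    (AnalyticAt.fun_comp (f := fun p => L p) (by rw [hL0]; exact hfA 0 h0) (hLa 0))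
    (AnalyticAt.fun_comp (f := fun p => L p) (by rw [hL0]; exact hgA 0 h0) (hLa 0))
    (by rw [hL0, hf0]) (by rw [hL0, hg0])
    (by simpa only [hLv] using line hfA hv hfv)
    (by simpa only [hLv] using line hgA hv hgv)
    (by
      intro d q r hd hq hr h1 h2
      have h3 := hnocommon (fun z => d (L.symm z)) (fun z => q (L.symm z))
        (fun z => r (L.symm z))
        (AnalyticAt.fun_comp (f := fun p => L.symm p) (by rw [hLs0]; exact hd) (hLs 0))
        (AnalyticAt.fun_comp (f := fun p => L.symm p) (by rw [hLs0]; exact hq) (hLs 0))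
        (AnalyticAt.fun_comp (f := fun p => L.symm p) (by rw [hLs0]; exact hr) (hLs 0))
        (by filter_upwards [htl.eventually h1] with z hz; simpa using hz)
        (by filter_upwards [htl.eventually h2] with z hz; simpa using hz)
      simpa only [hLs0] using h3)
  intro W hW
  refine mem_of_superset (key (L ⁻¹' W) (htL hW)) ?_
  rintro _ ⟨p, hp, rfl⟩
  exact ⟨L p, hp, rfl⟩

end PLS

/-- For holomorphic germs `f, g : (ℂ², 0) → (ℂ, 0)`, neither constant
and with no common irreducible factor, the map-germ `(f, g) : ℂ² → ℂ²` is locally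
surjective at `0`. -/
theorem pair_locally_surjective
    (f g : EuclideanSpace ℂ (Fin 2) → ℂ)
    (U : Set (EuclideanSpace ℂ (Fin 2))) (hU : U ∈ nhds (0 : EuclideanSpace ℂ (Fin 2)))
    (hfa : DifferentiableOn ℂ f U) (hga : DifferentiableOn ℂ g U)
    (hf0 : f 0 = 0) (hg0 : g 0 = 0)
    (hfnc : ¬ ∀ᶠ z in nhds (0 : EuclideanSpace ℂ (Fin 2)), f z = 0)
    (hgnc : ¬ ∀ᶠ z in nhds (0 : EuclideanSpace ℂ (Fin 2)), g z = 0)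
    -- no common (irreducible) factor in the ring of germs of holomorphic functions at 0 :
    (hnocommon : ∀ (d q r : EuclideanSpace ℂ (Fin 2) → ℂ),
      AnalyticAt ℂ d 0 → AnalyticAt ℂ q 0 → AnalyticAt ℂ r 0 →
      (f =ᶠ[nhds 0] fun z => d z * q z) → (g =ᶠ[nhds 0] fun z => d z * r z) → d 0 ≠ 0) :
    ∀ W ∈ nhds (0 : EuclideanSpace ℂ (Fin 2)),
      (fun z => (f z, g z)) '' W ∈ nhds ((0, 0) : ℂ × ℂ) := by
  exact PLS.main f g U hU hfa hga hf0 hg0 hfnc hgnc hnocommon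
end
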